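/- (Shafrir's sup + inf inequality, with the Chen–Lin constant.) Let Ω ⊂ ℝ² be an open set, 0 < a ≤ b < +∞, and K ⊂ Ω a compact set. Then there exists a constant c = c(a, b, K, Ω) such that for every function V : Ω → ℝ with a ≤ V(x) ≤ b for all x ∈ Ω, and every C² function u on Ω satisfying −Δu = V e^u in Ω, one has √(a/b) · sup_K u + inf_Ω u ≤ c. -/

import Mathlib

open MeasureTheory Filter Metric

abbrev E2 := EuclideanSpace ℝ (Fin 2)

noncomputable def pd (j : Fin 2) (u : E2 → ℝ) (x : E2) : ℝ :=
  fderiv ℝ u x (EuclideanSpace.single j 1)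

noncomputable def lapl (u : E2 → ℝ) (x : E2) : ℝ :=
  pd 0 (pd 0 u) x + pd 1 (pd 1 u) x

/-!
Transporting a measure with density `φ ^ 2 * ‖g'‖ ^ 2`, `g` entire, onto the unit disc along `g` by
the Knothe map and applying the divergence theorem gives the isoperimetric inequality
`4π ∫ φ ^ 2 * ‖g'‖ ^ 2 ≤ (∫ ‖∇φ‖ * ‖g'‖) ^ 2`. Suppose `-ΔW = V e ^ W ‖g'‖ ^ 2` with `a ≤ V ≤ b`.
By the Cauchy–Schwarz inequality the isoperimetric inequality becomes a differential inequality in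
`t` for the `‖g'‖ ^ 2`-area of `{t < W}` and the integral `f` of `-ΔW` over it, which bounds the
`‖g'‖ ^ 2`-area of `{0 < W}` below by the explicit function `massProfile a b f`.

If `-ΔU = V e ^ U` on a disc of radius `r`, subtract the harmonic extension of the boundary values,
approximated by the real part of an entire `P`, and take `‖g'‖ ^ 2 = e ^ Re P`: the
`‖g'‖ ^ 2`-area of the disc is then, up to the approximation error, at most `π r ^ 2` times the mean
of `e ^ U` over its boundary. So `M r = ∫_{|z| < r} -ΔU` satisfies
`2 a * massProfile a b (M r) ≤ r M' r`, while the circle average `A` of `U` satisfies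
`A' = -M / (2π r)`. Integrating up to `M = 4π`, then up to `M = 4π (1 + q)` with `q = √(a / b)`, and
finally up to the full radius bounds `q * U 0 + A` from above, and `A` is at least the minimum of
`U` over the circle.
-/

section Divergence

open scoped Laplacian

variable {E : Type*} [NormedAddCommGroup E]

/-- The divergence of a vector field `Z`, as the trace of its derivative. -/
noncomputable def divergence [NormedSpace ℝ E] (Z : E → E) (x : E) : ℝ :=
  LinearMap.trace ℝ E (fderiv ℝ Z x)

section NormedSpace

variable [NormedSpace ℝ E] [FiniteDimensional ℝ E]

lemma continuous_divergence {Z : E → E} (hZ : ContDiff ℝ 1 Z) : Continuous (divergence Z) :=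
  ((LinearMap.trace ℝ E ∘ₗ ContinuousLinearMap.coeLM ℝ).continuous_of_finiteDimensional).comp
    (hZ.continuous_fderiv one_ne_zero)

lemma divergence_smul {φ : E → ℝ} {Z : E → E} {x : E} (hφ : DifferentiableAt ℝ φ x)
    (hZ : DifferentiableAt ℝ Z x) :
    divergence (fun y => φ y • Z y) x = fderiv ℝ φ x (Z x) + φ x * divergence Z x := by
  have htrace : LinearMap.trace ℝ E ((fderiv ℝ φ x : E →ₗ[ℝ] ℝ).smulRight (Z x))
      = fderiv ℝ φ x (Z x) := LinearMap.trace_smulRight _ _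
  rw [divergence, fderiv_fun_smul hφ hZ, ContinuousLinearMap.toLinearMap_add, map_add, add_comm]
  simp only [divergence, ContinuousLinearMap.toLinearMap_smul, map_smul, smul_eq_mul]
  exact congrArg (· + _) htrace

variable [MeasurableSpace E] [BorelSpace E] (μ : Measure E) [μ.IsAddHaarMeasure]

lemma integral_fderiv_apply_eq_zero {f : E → ℝ} (hf : ContDiff ℝ 1 f) (hc : HasCompactSupport f)
    (v : E) : ∫ x, fderiv ℝ f x v ∂μ = 0 := by
  have hcont : Continuous fun x => fderiv ℝ f x v :=
    (hf.continuous_fderiv one_ne_zero).clm_apply continuous_const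
  simpa using integral_mul_fderiv_eq_neg_fderiv_mul_of_integrable (μ := μ)
    (f := fun _ => (1 : ℝ)) (g := f) (v := v) (by simp)
    (by simpa using hcont.integrable_of_hasCompactSupport (hc.fderiv_apply ℝ v))
    (by simpa using hf.continuous.integrable_of_hasCompactSupport hc)
    (by fun_prop) (fun x _ => hf.differentiable one_ne_zero x)

lemma integral_divergence_eq_zero {Z : E → E} (hZ : ContDiff ℝ 1 Z) (hc : HasCompactSupport Z) :
    ∫ x, divergence Z x ∂μ = 0 := by
  let b := Module.finBasis ℝ E
  let coord i : E →L[ℝ] ℝ := LinearMap.toContinuousLinearMap (b.coord i)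
  have hZi i : ContDiff ℝ 1 (coord i ∘ Z) := (coord i).contDiff.comp hZ
  have hci i : HasCompactSupport (coord i ∘ Z) := hc.comp_left (map_zero _)
  have hdiv x : divergence Z x = ∑ i, fderiv ℝ (coord i ∘ Z) x (b i) := by
    simp only [divergence, LinearMap.trace_eq_matrix_trace ℝ b, Matrix.trace, Matrix.diag_apply,
      LinearMap.toMatrix_apply]
    refine Finset.sum_congr rfl fun i _ => ?_
    rw [((coord i).hasFDerivAt.comp x (hZ.differentiable one_ne_zero x).hasFDerivAt).fderiv]
    rfl
  simp only [hdiv]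
  rw [integral_finsetSum _ fun i _ =>
    (((hZi i).continuous_fderiv one_ne_zero).clm_apply
      continuous_const).integrable_of_hasCompactSupport ((hci i).fderiv_apply ℝ (b i))]
  exact Finset.sum_eq_zero fun i _ => integral_fderiv_apply_eq_zero μ (hZi i) (hci i) (b i)

lemma integral_mul_divergence_eq_neg {φ : E → ℝ} {Z : E → E} (hφ : ContDiff ℝ 1 φ)
    (hc : HasCompactSupport φ) (hZ : ContDiff ℝ 1 Z) :
    ∫ x, φ x * divergence Z x ∂μ = -∫ x, fderiv ℝ φ x (Z x) ∂μ := by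
  have hzero : ∫ x, divergence (fun y => φ y • Z y) x ∂μ = 0 :=
    integral_divergence_eq_zero μ (hφ.smul hZ) hc.smul_right
  have hdiv x := divergence_smul (hφ.differentiable one_ne_zero x) (hZ.differentiable one_ne_zero x)
  have hint : Integrable (fun x => fderiv ℝ φ x (Z x)) μ := by
    refine ((hφ.continuous_fderiv one_ne_zero).clm_apply
      hZ.continuous).integrable_of_hasCompactSupport ((hc.fderiv ℝ).mono fun x hx => ?_)
    contrapose! hx
    simp [Function.notMem_support.1 hx]
  have hint' : Integrable (fun x => φ x * divergence Z x) μ :=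
    (hφ.continuous.mul (continuous_divergence hZ)).integrable_of_hasCompactSupport hc.mul_right
  simp only [hdiv] at hzero
  rw [integral_add hint hint'] at hzero
  linarith

end NormedSpace

variable [InnerProductSpace ℝ E] [FiniteDimensional ℝ E]

lemma contDiff_gradient {W : E → ℝ} (hW : ContDiff ℝ 2 W) : ContDiff ℝ 1 (gradient W) :=
  (InnerProductSpace.toDual ℝ E).symm.toContinuousLinearEquiv.contDiff.comp
    (hW.fderiv_right (m := 1) (by norm_num))

lemma norm_gradient (W : E → ℝ) (x : E) : ‖gradient W x‖ = ‖fderiv ℝ W x‖ :=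
  (InnerProductSpace.toDual ℝ E).symm.norm_map _

lemma fderiv_apply_gradient (W : E → ℝ) (x : E) :
    fderiv ℝ W x (gradient W x) = ‖fderiv ℝ W x‖ ^ 2 := by
  rw [← inner_gradient_left, real_inner_self_eq_norm_sq, norm_gradient]

lemma divergence_gradient {W : E → ℝ} (hW : ContDiff ℝ 2 W) (x : E) :
    divergence (gradient W) x = Δ W x := by
  have hd : HasFDerivAt (fderiv ℝ W) (fderiv ℝ (fderiv ℝ W) x) x :=
    ((hW.fderiv_right (m := 1) (by norm_num)).differentiable one_ne_zero x).hasFDerivAt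
  have hg := ((InnerProductSpace.toDual ℝ E).symm.toContinuousLinearEquiv.hasFDerivAt).comp x hd
  change HasFDerivAt (gradient W) _ x at hg
  rw [divergence, LinearMap.trace_eq_sum_inner _ (stdOrthonormalBasis ℝ E), hg.fderiv,
    InnerProductSpace.laplacian_eq_iteratedFDeriv_stdOrthonormalBasis]
  refine Finset.sum_congr rfl fun i _ => ?_
  rw [iteratedFDeriv_two_apply, real_inner_comm]
  exact InnerProductSpace.toDual_symm_apply

end Divergence

section StripArea

/-- The area of the part of the unit disc lying over abscissas between `0` and `sin θ`,
for `θ ∈ [-π/2, π/2]`; the same formula is used for every real `θ`. -/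
noncomputable def stripArea (θ : ℝ) : ℝ := θ + Real.sin θ * Real.cos θ

lemma hasDerivAt_stripArea (θ : ℝ) : HasDerivAt stripArea (2 * Real.cos θ ^ 2) θ := by
  refine ((hasDerivAt_id θ).add
    ((Real.hasDerivAt_sin θ).mul (Real.hasDerivAt_cos θ))).congr_deriv ?_
  linear_combination -Real.sin_sq_add_cos_sq θ

lemma contDiff_stripArea : ContDiff ℝ 1 stripArea :=
  contDiff_id.add (Real.contDiff_sin.mul Real.contDiff_cos)

lemma strictMono_stripArea : StrictMono stripArea := by
  intro x y hxy
  have hdiff : stripArea y - stripArea x = y - x + Real.sin (y - x) * Real.cos (y + x) := by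
    have h := Real.sin_sub_sin (2 * y) (2 * x)
    rw [Real.sin_two_mul, Real.sin_two_mul, ← mul_sub, ← mul_add,
      mul_div_cancel_left₀ _ two_ne_zero, mul_div_cancel_left₀ _ two_ne_zero] at h
    simp only [stripArea]
    linarith
  have hsin : |Real.sin (y - x) * Real.cos (y + x)| < y - x := by
    rw [abs_mul]
    calc |Real.sin (y - x)| * |Real.cos (y + x)| ≤ |Real.sin (y - x)| :=
          mul_le_of_le_one_right (abs_nonneg _) (Real.abs_cos_le_one _)
      _ < |y - x| := Real.abs_sin_lt_abs (sub_pos.2 hxy).ne'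
      _ = y - x := abs_of_pos (sub_pos.2 hxy)
  linarith [neg_lt_of_abs_lt hsin]

lemma surjective_stripArea : Function.Surjective stripArea := by
  have hbound θ : |Real.sin θ * Real.cos θ| ≤ 1 := by
    rw [abs_mul]
    exact mul_le_one₀ (Real.abs_sin_le_one _) (abs_nonneg _) (Real.abs_cos_le_one _)
  refine contDiff_stripArea.continuous.surjective
    (tendsto_atTop_mono (f := fun θ => θ - 1) (fun θ => ?_)
      (tendsto_atTop_add_const_right _ _ tendsto_id))
    (tendsto_atBot_mono (f := fun θ => θ + 1) (fun θ => ?_)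
      (tendsto_atBot_add_const_right _ _ tendsto_id))
  · rw [stripArea]
    linarith [neg_le_of_abs_le (hbound θ)]
  · rw [stripArea]
    linarith [le_of_abs_le (hbound θ)]

/-- The inverse of `stripArea`. -/
noncomputable def stripAngle : ℝ ≃ₜ ℝ :=
  (strictMono_stripArea.orderIsoOfSurjective stripArea surjective_stripArea).toHomeomorph.symm

lemma stripArea_stripAngle (s : ℝ) : stripArea (stripAngle s) = s :=
  stripAngle.symm_apply_apply s

lemma cos_stripAngle_pos {s : ℝ} (hs : s ∈ Set.Ioo (-(Real.pi / 2)) (Real.pi / 2)) :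
    0 < Real.cos (stripAngle s) := by
  refine Real.cos_pos_of_mem_Ioo ⟨?_, ?_⟩ <;>
  · rw [← strictMono_stripArea.lt_iff_lt, stripArea_stripAngle]
    simpa [stripArea] using by first | exact hs.1 | exact hs.2

lemma hasDerivAt_stripAngle {s : ℝ} (hs : s ∈ Set.Ioo (-(Real.pi / 2)) (Real.pi / 2)) :
    HasDerivAt stripAngle (2 * Real.cos (stripAngle s) ^ 2)⁻¹ s :=
  HasDerivAt.of_local_left_inverse stripAngle.continuous.continuousAt (hasDerivAt_stripArea _)
    (by have := cos_stripAngle_pos hs; positivity) (Eventually.of_forall stripArea_stripAngle)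

lemma contDiffAt_stripAngle {s : ℝ} (hs : s ∈ Set.Ioo (-(Real.pi / 2)) (Real.pi / 2)) :
    ContDiffAt ℝ 1 stripAngle s :=
  stripAngle.symm.toOpenPartialHomeomorph.contDiffAt_symm_deriv
    (by have := cos_stripAngle_pos hs; positivity) (Set.mem_univ _) (hasDerivAt_stripArea _)
    contDiff_stripArea.contDiffAt

end StripArea

section SeparableConvolution

/-- `f` is continuously differentiable with derivative `f'`, and both are bounded by `1`. -/
structure IsUnitC1 (f f' : ℝ → ℝ) : Prop where
  hasDerivAt : ∀ t, HasDerivAt f (f' t) t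
  continuous_deriv : Continuous f'
  abs_le : ∀ t, |f t| ≤ 1
  abs_deriv_le : ∀ t, |f' t| ≤ 1

namespace IsUnitC1

variable {f f' : ℝ → ℝ}

lemma continuous (hf : IsUnitC1 f f') : Continuous f :=
  continuous_iff_continuousAt.2 fun t => (hf.hasDerivAt t).continuousAt

lemma one : IsUnitC1 1 0 :=
  ⟨fun t => hasDerivAt_const t 1, continuous_const, fun _ => by simp, fun _ => by simp⟩

end IsUnitC1

lemma integral_lt_integral_of_lt {α : Type*} [MeasurableSpace α] {μ : Measure α} [NeZero μ]
    {f g : α → ℝ} (hf : Integrable f μ) (hg : Integrable g μ) (h : ∀ x, f x < g x) :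
    ∫ x, f x ∂μ < ∫ x, g x ∂μ := by
  rw [← sub_pos, ← integral_sub hg hf,
    integral_pos_iff_support_of_nonneg (fun x => (sub_pos.2 (h x)).le) (hg.sub hf),
    Function.support_eq_univ fun x => (sub_pos.2 (h x)).ne']
  exact Measure.measure_univ_pos.2 (NeZero.ne μ)

/-- The convolution of the measure `ν` on `ℂ` with the separable kernel `f (re z) * g (im z)`. -/
noncomputable def sepConv (ν : Measure ℂ) (f g : ℝ → ℝ) (z : ℂ) : ℝ :=
  ∫ ζ, f (z.re - ζ.re) * g (z.im - ζ.im) ∂ν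

variable {ν : Measure ℂ} {f f' g g' : ℝ → ℝ}

lemma sepConv_zero_right (f : ℝ → ℝ) (z : ℂ) : sepConv ν f 0 z = 0 := by simp [sepConv]

lemma sepConv_one_one (z : ℂ) : sepConv ν 1 1 z = ν.real Set.univ := by simp [sepConv]

variable [IsFiniteMeasure ν]

lemma integrable_sepConv (hf : Continuous f) (hg : Continuous g) (hf1 : ∀ t, |f t| ≤ 1)
    (hg1 : ∀ t, |g t| ≤ 1) (z : ℂ) :
    Integrable (fun ζ : ℂ => f (z.re - ζ.re) * g (z.im - ζ.im)) ν :=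
  Integrable.of_bound (by fun_prop) 1 <| Eventually.of_forall fun ζ => by
    rw [norm_mul]
    exact mul_le_one₀ (hf1 _) (norm_nonneg _) (hg1 _)

lemma continuous_sepConv (hf : Continuous f) (hg : Continuous g) (hf1 : ∀ t, |f t| ≤ 1)
    (hg1 : ∀ t, |g t| ≤ 1) : Continuous (sepConv ν f g) := by
  refine continuous_of_dominated (bound := fun _ => 1) (fun z => by fun_prop) (fun z => ?_)
    (integrable_const _) (Eventually.of_forall fun ζ => by fun_prop)
  refine Eventually.of_forall fun ζ => ?_
  rw [norm_mul]
  exact mul_le_one₀ (hf1 _) (norm_nonneg _) (hg1 _)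

lemma sepConv_lt_sepConv [NeZero ν] {f₁ g₁ f₂ g₂ : ℝ → ℝ} (hf₁ : Continuous f₁)
    (hg₁ : Continuous g₁) (hf₂ : Continuous f₂) (hg₂ : Continuous g₂) (hf₁' : ∀ t, |f₁ t| ≤ 1)
    (hg₁' : ∀ t, |g₁ t| ≤ 1) (hf₂' : ∀ t, |f₂ t| ≤ 1) (hg₂' : ∀ t, |g₂ t| ≤ 1)
    (hlt : ∀ s t, f₁ s * g₁ t < f₂ s * g₂ t) (z : ℂ) : sepConv ν f₁ g₁ z < sepConv ν f₂ g₂ z := by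
  exact integral_lt_integral_of_lt (integrable_sepConv hf₁ hg₁ hf₁' hg₁' z)
    (integrable_sepConv hf₂ hg₂ hf₂' hg₂' z) fun ζ => hlt _ _

lemma hasFDerivAt_sepConv (hf : IsUnitC1 f f') (hg : IsUnitC1 g g') (z : ℂ) :
    HasFDerivAt (sepConv ν f g)
      (sepConv ν f' g z • Complex.reCLM + sepConv ν f g' z • Complex.imCLM) z := by
  have hfc := hf.continuous
  have hgc := hg.continuous
  have hf'c := hf.continuous_deriv
  have hg'c := hg.continuous_deriv
  have hi₁ := integrable_sepConv (ν := ν) hf'c hgc hf.abs_deriv_le hg.abs_le z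
  have hi₂ := integrable_sepConv (ν := ν) hfc hg'c hf.abs_le hg.abs_deriv_le z
  have hderiv : HasFDerivAt (sepConv ν f g)
      (∫ ζ, ((f' (z.re - ζ.re) * g (z.im - ζ.im)) • Complex.reCLM
        + (f (z.re - ζ.re) * g' (z.im - ζ.im)) • Complex.imCLM) ∂ν) z := by
    refine hasFDerivAt_integral_of_dominated_of_fderiv_le (bound := fun _ => 2) (s := Set.univ)
      (F := fun (z ζ : ℂ) => f (z.re - ζ.re) * g (z.im - ζ.im))
      (F' := fun (z ζ : ℂ) => (f' (z.re - ζ.re) * g (z.im - ζ.im)) • Complex.reCLM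
        + (f (z.re - ζ.re) * g' (z.im - ζ.im)) • Complex.imCLM) univ_mem
      (Eventually.of_forall fun z => (by fun_prop : Continuous _).aestronglyMeasurable)
      (integrable_sepConv hfc hgc hf.abs_le hg.abs_le z)
      (by fun_prop : Continuous _).aestronglyMeasurable
      (Eventually.of_forall fun ζ z _ => ?_) (integrable_const _)
      (Eventually.of_forall fun ζ z _ => ?_)
    · refine (norm_add_le _ _).trans ?_
      have h₁ := mul_le_one₀ (hf.abs_deriv_le (z.re - ζ.re)) (abs_nonneg _)
        (hg.abs_le (z.im - ζ.im))
      have h₂ := mul_le_one₀ (hf.abs_le (z.re - ζ.re)) (abs_nonneg _)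
        (hg.abs_deriv_le (z.im - ζ.im))
      simp only [norm_smul, Complex.reCLM_norm, Complex.imCLM_norm, mul_one, Real.norm_eq_abs,
        abs_mul]
      linarith
    · have hre := (hf.hasDerivAt (z.re - ζ.re)).comp_hasFDerivAt z
        ((Complex.reCLM.hasFDerivAt (x := z)).sub_const ζ.re)
      have him := (hg.hasDerivAt (z.im - ζ.im)).comp_hasFDerivAt z
        ((Complex.imCLM.hasFDerivAt (x := z)).sub_const ζ.im)
      refine (hre.mul him).congr_fderiv ?_
      ext v
      simp only [Complex.reCLM_apply, Function.comp_apply, Complex.imCLM_apply, add_apply,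
        smul_apply, smul_eq_mul]
      ring
  refine hderiv.congr_fderiv ?_
  rw [integral_add (hi₁.smul_const _) (hi₂.smul_const _), integral_smul_const, integral_smul_const]
  rfl

lemma contDiff_sepConv (hf : IsUnitC1 f f') (hg : IsUnitC1 g g') :
    ContDiff ℝ 1 (sepConv ν f g) := by
  refine contDiff_one_iff_hasFDerivAt.2 ⟨_, ?_, hasFDerivAt_sepConv hf hg⟩
  have h₁ := continuous_sepConv (ν := ν) hf.continuous_deriv hg.continuous hf.abs_deriv_le
    hg.abs_le
  have h₂ := continuous_sepConv (ν := ν) hf.continuous hg.continuous_deriv hf.abs_le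
    hg.abs_deriv_le
  fun_prop

end SeparableConvolution

section Logistic

/-- The density of the standard logistic distribution, the derivative of `Real.sigmoid`. -/
noncomputable def logisticDensity (t : ℝ) : ℝ := Real.sigmoid t * (1 - Real.sigmoid t)

lemma logisticDensity_pos (t : ℝ) : 0 < logisticDensity t :=
  mul_pos (Real.sigmoid_pos t) (sub_pos.2 (Real.sigmoid_lt_one t))

lemma logisticDensity_le_one (t : ℝ) : logisticDensity t ≤ 1 :=
  mul_le_one₀ (Real.sigmoid_le_one t) (sub_nonneg.2 (Real.sigmoid_le_one t))
    (sub_le_self _ (Real.sigmoid_nonneg t))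

lemma continuous_logisticDensity : Continuous logisticDensity :=
  continuous_sigmoid.mul (continuous_const.sub continuous_sigmoid)

lemma abs_sigmoid_le_one (t : ℝ) : |Real.sigmoid t| ≤ 1 :=
  abs_le.2 ⟨by linarith [Real.sigmoid_nonneg t], Real.sigmoid_le_one t⟩

lemma abs_logisticDensity_le_one (t : ℝ) : |logisticDensity t| ≤ 1 :=
  abs_le.2 ⟨by linarith [logisticDensity_pos t], logisticDensity_le_one t⟩

lemma isUnitC1_sigmoid : IsUnitC1 Real.sigmoid logisticDensity :=
  ⟨Real.hasDerivAt_sigmoid, continuous_logisticDensity, abs_sigmoid_le_one,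
    abs_logisticDensity_le_one⟩

lemma isUnitC1_logisticDensity :
    IsUnitC1 logisticDensity fun t => logisticDensity t * (1 - 2 * Real.sigmoid t) where
  hasDerivAt t := by
    refine ((Real.hasDerivAt_sigmoid t).mul
      ((Real.hasDerivAt_sigmoid t).const_sub 1)).congr_deriv ?_
    rw [logisticDensity]
    ring
  continuous_deriv :=
    continuous_logisticDensity.mul (continuous_const.sub (continuous_const.mul continuous_sigmoid))
  abs_le := abs_logisticDensity_le_one
  abs_deriv_le t := by
    rw [abs_mul]
    refine mul_le_one₀ (abs_logisticDensity_le_one t) (abs_nonneg _) (abs_le.2 ⟨?_, ?_⟩) <;>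
      linarith [Real.sigmoid_nonneg t, Real.sigmoid_le_one t]

lemma lintegral_logisticDensity : ∫⁻ t, ENNReal.ofReal (logisticDensity t) = 1 := by
  have himage := lintegral_deriv_eq_volume_image_of_monotoneOn MeasurableSet.univ
    (fun t _ => (Real.hasDerivAt_sigmoid t).hasDerivWithinAt) (Real.sigmoid_monotone.monotoneOn _)
  rw [Set.image_univ, Real.range_sigmoid, Real.volume_Ioo, setLIntegral_univ] at himage
  simpa [logisticDensity] using himage

/-- The product density `logisticDensity (re w) * logisticDensity (im w)` on `ℂ`, used as a
positive mollifier. -/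
noncomputable def logisticKernel (w : ℂ) : ℝ := logisticDensity w.re * logisticDensity w.im

lemma logisticKernel_pos (w : ℂ) : 0 < logisticKernel w :=
  mul_pos (logisticDensity_pos _) (logisticDensity_pos _)

lemma logisticKernel_le_one (w : ℂ) : logisticKernel w ≤ 1 :=
  mul_le_one₀ (logisticDensity_le_one _) (logisticDensity_pos _).le (logisticDensity_le_one _)

@[fun_prop]
lemma continuous_logisticKernel : Continuous logisticKernel :=
  (continuous_logisticDensity.comp Complex.continuous_re).mul
    (continuous_logisticDensity.comp Complex.continuous_im)

lemma lintegral_logisticKernel : ∫⁻ w, ENNReal.ofReal (logisticKernel w) = 1 := by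
  have hmeas : AEMeasurable (fun t => ENNReal.ofReal (logisticDensity t)) :=
    continuous_logisticDensity.measurable.ennreal_ofReal.aemeasurable
  rw [← Complex.volume_preserving_equiv_real_prod.symm.lintegral_comp_emb
    (MeasurableEquiv.measurableEmbedding _)]
  simp only [logisticKernel, ENNReal.ofReal_mul (logisticDensity_pos _).le,
    Complex.measurableEquivRealProd_symm_apply]
  rw [Measure.volume_eq_prod, lintegral_prod_mul hmeas hmeas, lintegral_logisticDensity, one_mul]

lemma lintegral_comp_mul_left_complex {f : ℂ → ENNReal} (hf : Measurable f) {c : ℂ} (hc : c ≠ 0) :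
    ∫⁻ y, f (c * y) * ENNReal.ofReal (‖c‖ ^ 2) = ∫⁻ y, f y := by
  have hdet : LinearMap.det (LinearMap.mulLeft ℝ c) = ‖c‖ ^ 2 := by
    rw [← Complex.normSq_eq_norm_sq, ← Algebra.norm_complex_apply, Algebra.norm_apply]
    rfl
  have hmap := Measure.map_linearMap_addHaar_eq_smul_addHaar (volume : Measure ℂ)
    (f := LinearMap.mulLeft ℝ c) (by rw [hdet]; positivity)
  have hmeas : Measurable (LinearMap.mulLeft ℝ c) := measurable_const_mul c
  have hpush := lintegral_map (μ := volume) hf hmeas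
  rw [hmap, hdet, abs_of_nonneg (by positivity), lintegral_smul_measure, smul_eq_mul] at hpush
  rw [lintegral_mul_const' _ _ ENNReal.ofReal_ne_top]
  change (∫⁻ y, f (LinearMap.mulLeft ℝ c y)) * _ = _
  rw [← hpush, mul_right_comm, ← ENNReal.ofReal_mul (by positivity),
    inv_mul_cancel₀ (by positivity), ENNReal.ofReal_one, one_mul]

end Logistic

section Knothe

lemma trace_complex (L : ℂ →ₗ[ℝ] ℂ) : LinearMap.trace ℝ ℂ L = (L 1).re + (L Complex.I).im := by
  rw [LinearMap.trace_eq_matrix_trace ℝ Complex.basisOneI, Matrix.trace_fin_two]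
  simp [LinearMap.toMatrix_apply, Complex.basisOneI]

lemma divergence_complex {X Y : ℂ → ℝ} {X' Y' : ℂ →L[ℝ] ℝ} {z : ℂ} (hX : HasFDerivAt X X' z)
    (hY : HasFDerivAt Y Y' z) :
    divergence (fun w => (⟨X w, Y w⟩ : ℂ)) z = X' 1 + Y' Complex.I := by
  have hZ : HasFDerivAt (fun w => (⟨X w, Y w⟩ : ℂ))
      (Complex.equivRealProdCLM.symm.toContinuousLinearMap ∘L X'.prod Y') z :=
    Complex.equivRealProdCLM.symm.hasFDerivAt.comp z (hX.prodMk hY)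
  rw [divergence, hZ.fderiv, trace_complex]
  rfl

variable (ν : Measure ℂ)

/-- The angular coordinate of `knotheMap`: it carries the first marginal of `ν`, mollified by the
logistic density, to the first marginal of the uniform measure on the unit disc. -/
noncomputable def knotheAngle (z : ℂ) : ℝ :=
  stripAngle (Real.pi / ν.real Set.univ * sepConv ν Real.sigmoid 1 z - Real.pi / 2)

/-- The Knothe map of `ν`, mollified by `logisticKernel`, onto the unit disc: each vertical line is
mapped to a vertical chord so that the conditional measures correspond. -/
noncomputable def knotheMap (z : ℂ) : ℂ :=
  ⟨Real.sin (knotheAngle ν z), Real.cos (knotheAngle ν z) *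
    (2 * (sepConv ν logisticDensity Real.sigmoid z / sepConv ν logisticDensity 1 z) - 1)⟩

variable [IsFiniteMeasure ν] [NeZero ν]

lemma knotheAngle_arg_mem (z : ℂ) :
    Real.pi / ν.real Set.univ * sepConv ν Real.sigmoid 1 z - Real.pi / 2 ∈
      Set.Ioo (-(Real.pi / 2)) (Real.pi / 2) := by
  have hm : 0 < ν.real Set.univ := measureReal_univ_pos
  have hpos : 0 < sepConv ν Real.sigmoid 1 z := by
    rw [← sepConv_zero_right (ν := ν) 1 z]
    exact sepConv_lt_sepConv continuous_one continuous_zero continuous_sigmoid continuous_one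
      IsUnitC1.one.abs_le (by simp) abs_sigmoid_le_one IsUnitC1.one.abs_le
      (fun s t => by simpa using Real.sigmoid_pos s) z
  have hlt : sepConv ν Real.sigmoid 1 z < ν.real Set.univ := by
    rw [← sepConv_one_one (ν := ν) z]
    exact sepConv_lt_sepConv continuous_sigmoid continuous_one continuous_one continuous_one
      abs_sigmoid_le_one IsUnitC1.one.abs_le IsUnitC1.one.abs_le IsUnitC1.one.abs_le
      (fun s t => by simpa using Real.sigmoid_lt_one s) z
  have hpi := Real.pi_pos
  constructor
  · have : 0 < Real.pi / ν.real Set.univ * sepConv ν Real.sigmoid 1 z := by positivity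
    linarith
  · have : Real.pi / ν.real Set.univ * sepConv ν Real.sigmoid 1 z < Real.pi := by
      rw [div_mul_eq_mul_div, div_lt_iff₀ hm]
      exact mul_lt_mul_of_pos_left hlt hpi
    linarith

lemma cos_knotheAngle_pos (z : ℂ) : 0 < Real.cos (knotheAngle ν z) :=
  cos_stripAngle_pos (knotheAngle_arg_mem ν z)

lemma sepConv_logisticDensity_one_pos (z : ℂ) : 0 < sepConv ν logisticDensity 1 z := by
  rw [← sepConv_zero_right (ν := ν) 1 z]
  exact sepConv_lt_sepConv continuous_one continuous_zero continuous_logisticDensity continuous_one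
    IsUnitC1.one.abs_le (by simp) abs_logisticDensity_le_one IsUnitC1.one.abs_le
    (fun s t => by simpa using logisticDensity_pos s) z

lemma sepConv_logisticDensity_sigmoid_div_mem (z : ℂ) :
    sepConv ν logisticDensity Real.sigmoid z / sepConv ν logisticDensity 1 z ∈ Set.Icc 0 1 := by
  have hn : 0 < sepConv ν logisticDensity 1 z := sepConv_logisticDensity_one_pos ν z
  have hlt : sepConv ν logisticDensity Real.sigmoid z < sepConv ν logisticDensity 1 z :=
    sepConv_lt_sepConv continuous_logisticDensity continuous_sigmoid continuous_logisticDensity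
      continuous_one abs_logisticDensity_le_one abs_sigmoid_le_one abs_logisticDensity_le_one
      IsUnitC1.one.abs_le
      (fun s t => mul_lt_mul_of_pos_left (Real.sigmoid_lt_one t) (logisticDensity_pos s)) z
  have hnonneg : 0 ≤ sepConv ν logisticDensity Real.sigmoid z :=
    integral_nonneg fun ζ => mul_nonneg (logisticDensity_pos _).le (Real.sigmoid_nonneg _)
  exact ⟨div_nonneg hnonneg hn.le, (div_le_one hn).2 hlt.le⟩

lemma norm_knotheMap_le_one (z : ℂ) : ‖knotheMap ν z‖ ≤ 1 := by
  obtain ⟨hq0, hq1⟩ := sepConv_logisticDensity_sigmoid_div_mem ν z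
  rw [← sq_le_one_iff₀ (norm_nonneg _), ← Complex.normSq_eq_norm_sq, Complex.normSq_apply,
    knotheMap]
  nlinarith [Real.sin_sq_add_cos_sq (knotheAngle ν z), mul_nonneg
    (mul_nonneg (sq_nonneg (Real.cos (knotheAngle ν z))) hq0) (sub_nonneg.2 hq1)]

lemma hasFDerivAt_knotheAngle (z : ℂ) :
    HasFDerivAt (knotheAngle ν) (((2 * Real.cos (knotheAngle ν z) ^ 2)⁻¹ *
      (Real.pi / ν.real Set.univ * sepConv ν logisticDensity 1 z)) • Complex.reCLM) z := by
  refine ((hasDerivAt_stripAngle (knotheAngle_arg_mem ν z)).comp_hasFDerivAt z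
    (((hasFDerivAt_sepConv isUnitC1_sigmoid IsUnitC1.one z).const_mul _).sub_const
      _)).congr_fderiv ?_
  rw [sepConv_zero_right, zero_smul, add_zero, smul_smul, smul_smul, mul_assoc, ← knotheAngle]

lemma contDiff_knotheMap : ContDiff ℝ 1 (knotheMap ν) := by
  have hangle : ContDiff ℝ 1 (knotheAngle ν) := contDiff_iff_contDiffAt.2 fun z =>
    (contDiffAt_stripAngle (knotheAngle_arg_mem ν z)).comp z
      ((contDiff_const.mul (contDiff_sepConv isUnitC1_sigmoid IsUnitC1.one)).sub
        contDiff_const).contDiffAt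
  have hquot := (contDiff_sepConv (ν := ν) isUnitC1_logisticDensity isUnitC1_sigmoid).div
    (contDiff_sepConv isUnitC1_logisticDensity IsUnitC1.one)
    fun z => (sepConv_logisticDensity_one_pos ν z).ne'
  exact Complex.equivRealProdCLM.symm.contDiff.comp <| (Real.contDiff_sin.comp hangle).prodMk <|
    (Real.contDiff_cos.comp hangle).mul ((contDiff_const.mul hquot).sub contDiff_const)

lemma divergence_knotheMap (z : ℂ) :
    divergence (knotheMap ν) z =
      Real.pi * sepConv ν logisticDensity 1 z
          / (2 * ν.real Set.univ * Real.cos (knotheAngle ν z))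
        + 2 * Real.cos (knotheAngle ν z) * sepConv ν logisticDensity logisticDensity z
          / sepConv ν logisticDensity 1 z := by
  have hangle := hasFDerivAt_knotheAngle ν z
  have hn := hasFDerivAt_sepConv (ν := ν) isUnitC1_logisticDensity IsUnitC1.one z
  have hQ := hasFDerivAt_sepConv (ν := ν) isUnitC1_logisticDensity isUnitC1_sigmoid z
  have hn0 := (sepConv_logisticDensity_one_pos ν z).ne'
  have hquot := hQ.mul ((hasDerivAt_inv hn0).comp_hasFDerivAt z hn)
  refine (divergence_complex hangle.sin
    (hangle.cos.mul ((hquot.const_mul 2).sub_const 1))).trans ?_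
  have hcos := (cos_knotheAngle_pos ν z).ne'
  have hm := (measureReal_univ_pos (μ := ν)).ne'
  simp [sepConv_zero_right]
  field_simp

lemma two_mul_sqrt_le_divergence_knotheMap (z : ℂ) :
    2 * √(Real.pi / ν.real Set.univ * ∫ ζ, logisticKernel (z - ζ) ∂ν)
      ≤ divergence (knotheMap ν) z := by
  have hn := sepConv_logisticDensity_one_pos ν z
  have hcos := cos_knotheAngle_pos ν z
  have hm := measureReal_univ_pos (μ := ν)
  have hp : 0 ≤ sepConv ν logisticDensity logisticDensity z :=
    integral_nonneg fun ζ => (logisticKernel_pos (z - ζ)).le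
  change 2 * √(Real.pi / ν.real Set.univ * sepConv ν logisticDensity logisticDensity z) ≤ _
  rw [divergence_knotheMap]
  have amgm {s t : ℝ} (hs : 0 ≤ s) (ht : 0 ≤ t) : 2 * √(s * t) ≤ s + t := by
    rw [Real.sqrt_mul hs]
    nlinarith [sq_nonneg (√s - √t), Real.sq_sqrt hs, Real.sq_sqrt ht]
  refine le_trans (le_of_eq ?_) (amgm (by have := Real.pi_pos; positivity) (by positivity))
  congr 2
  field_simp

end Knothe

section WeightedIsoperimetric

open scoped Topology ComplexConjugate

variable {g : ℂ → ℂ}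

lemma divergence_conj_deriv_mul_comp (hg : Differentiable ℂ g) {T : ℂ → ℂ} {z : ℂ}
    (hT : DifferentiableAt ℝ T (g z)) :
    divergence (fun w => conj (deriv g w) * T (g w)) z
      = divergence T (g z) * ‖deriv g z‖ ^ 2 := by
  have hg' : HasFDerivAt g _ z := (hg z).hasDerivAt.hasFDerivAt.restrictScalars ℝ
  have hg'' : HasFDerivAt (fun w => conj (deriv g w)) _ z :=
    Complex.conjCLE.hasFDerivAt.comp z
      ((hg.analyticAt z).deriv.differentiableAt.hasDerivAt.hasFDerivAt.restrictScalars ℝ)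
  have hTg : HasFDerivAt (fun w => T (g w)) _ z := hT.hasFDerivAt.comp z hg'
  have htrace : LinearMap.trace ℝ ℂ (LinearMap.mulLeft ℝ (conj (deriv g z)) *
      ((fderiv ℝ T (g z) : ℂ →ₗ[ℝ] ℂ) * LinearMap.mulLeft ℝ (deriv g z)))
        = divergence T (g z) * ‖deriv g z‖ ^ 2 := by
    have hconj : LinearMap.mulLeft ℝ (deriv g z) * LinearMap.mulLeft ℝ (conj (deriv g z))
        = (‖deriv g z‖ ^ 2) • LinearMap.id := by
      ext
      simp [← mul_assoc, Complex.mul_conj, Complex.normSq_eq_norm_sq]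
    rw [LinearMap.trace_mul_comm, mul_assoc, hconj, mul_smul_comm, map_smul, smul_eq_mul, mul_comm]
    rfl
  rw [divergence, (hg''.fun_mul hTg).fderiv, ← htrace]
  simp only [trace_complex]
  simp [mul_comm]
  ring

lemma integral_mul_divergence_comp_le (hg : Differentiable ℂ g) {T : ℂ → ℂ} (hT : ContDiff ℝ 1 T)
    (hT1 : ∀ z, ‖T z‖ ≤ 1) {φ : ℂ → ℝ} (hφ : ContDiff ℝ 1 φ) (hc : HasCompactSupport φ) :
    ∫ z, φ z * (divergence T (g z) * ‖deriv g z‖ ^ 2) ≤ ∫ z, ‖fderiv ℝ φ z‖ * ‖deriv g z‖ := by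
  have hg' : ContDiff ℂ 2 g := hg.contDiff
  have hdg : ContDiff ℝ 1 (deriv g) := (hg'.deriv' (n := 1)).restrict_scalars ℝ
  have hZ : ContDiff ℝ 1 fun z => conj (deriv g z) * T (g z) :=
    (Complex.conjCLE.contDiff.comp hdg).mul (hT.comp ((hg'.restrict_scalars ℝ).of_le one_le_two))
  have hdφ : Continuous (fderiv ℝ φ) := hφ.continuous_fderiv one_ne_zero
  simp only [← divergence_conj_deriv_mul_comp hg (hT.differentiable one_ne_zero _)]
  rw [integral_mul_divergence_eq_neg volume hφ hc hZ, ← integral_neg]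
  have hdg' : Continuous (deriv g) := hdg.continuous
  refine integral_mono
    (((hdφ.clm_apply hZ.continuous).integrable_of_hasCompactSupport
      ((hc.fderiv ℝ).mono fun z hz => ?_)).neg)
    ((hdφ.norm.mul hdg'.norm).integrable_of_hasCompactSupport (hc.fderiv ℝ).norm.mul_right)
    fun z => ?_
  · contrapose! hz
    simp [Function.notMem_support.1 hz]
  calc -(fderiv ℝ φ z (conj (deriv g z) * T (g z)))
      ≤ ‖fderiv ℝ φ z‖ * ‖conj (deriv g z) * T (g z)‖ :=
        (neg_le_abs _).trans ((fderiv ℝ φ z).le_opNorm _)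
    _ ≤ ‖fderiv ℝ φ z‖ * ‖deriv g z‖ := by
        rw [norm_mul, RCLike.norm_conj]
        gcongr
        exact mul_le_of_le_one_right (norm_nonneg _) (hT1 _)

/-- The density at the point `g z`, mollified at scale `N⁻¹`, of the image under `g` of the measure
with density `D`. -/
noncomputable def mollifiedImageDensity (g : ℂ → ℂ) (D : ℂ → ℝ) (N : ℝ) (z : ℂ) : ℝ :=
  ∫ x, logisticKernel (N * (g z - g x)) * (D x * N ^ 2)

section MollifiedImageDensity

variable {D : ℂ → ℝ}

lemma mollifiedImageDensity_nonneg (hD0 : 0 ≤ D) (N : ℝ) (z : ℂ) :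
    0 ≤ mollifiedImageDensity g D N z :=
  integral_nonneg fun x => mul_nonneg (logisticKernel_pos _).le (mul_nonneg (hD0 x) (sq_nonneg N))

lemma continuous_mollifiedImageDensity (hg : Continuous g) (hD : Continuous D)
    (hDc : HasCompactSupport D) (N : ℝ) : Continuous (mollifiedImageDensity g D N) := by
  refine continuous_of_dominated (bound := fun x => |D x * N ^ 2|)
    (fun z => (by fun_prop : Continuous _).aestronglyMeasurable)
    (fun z => Eventually.of_forall fun x => ?_)
    ((hD.integrable_of_hasCompactSupport hDc).mul_const _).abs
    (Eventually.of_forall fun x => by fun_prop)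
  rw [norm_mul, Real.norm_of_nonneg (logisticKernel_pos _).le]
  exact mul_le_of_le_one_left (norm_nonneg _) (logisticKernel_le_one _)

lemma integral_map_withDensity_ofReal (hg : Continuous g) (hD : Continuous D) (hD0 : 0 ≤ D)
    {F : ℂ → ℝ} (hF : Continuous F) :
    ∫ ζ, F ζ ∂(Measure.map g (volume.withDensity fun x => ENNReal.ofReal (D x)))
      = ∫ x, F (g x) * D x := by
  rw [integral_map hg.aemeasurable hF.aestronglyMeasurable,
    integral_withDensity_eq_integral_toReal_smul hD.measurable.ennreal_ofReal (by simp)]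
  exact integral_congr_ae (Eventually.of_forall fun x => by
    simp only [ENNReal.toReal_ofReal (hD0 x), smul_eq_mul, mul_comm])

lemma integral_mul_sqrt_mollifiedImageDensity_one_le (hg : Differentiable ℂ g) (hD : Continuous D)
    (hDc : HasCompactSupport D) (hD0 : 0 ≤ D) (hm : 0 < ∫ x, D x) {φ : ℂ → ℝ}
    (hφ : ContDiff ℝ 1 φ) (hc : HasCompactSupport φ) (hφ0 : 0 ≤ φ) :
    2 * √(Real.pi / ∫ x, D x) * ∫ z, φ z * √(mollifiedImageDensity g D 1 z) * ‖deriv g z‖ ^ 2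
      ≤ ∫ z, ‖fderiv ℝ φ z‖ * ‖deriv g z‖ := by
  set ν := Measure.map g (volume.withDensity fun x => ENNReal.ofReal (D x))
  have hint {F : ℂ → ℝ} (hF : Continuous F) : ∫ ζ, F ζ ∂ν = ∫ x, F (g x) * D x :=
    integral_map_withDensity_ofReal hg.continuous hD hD0 hF
  have : IsFiniteMeasure (volume.withDensity fun x => ENNReal.ofReal (D x)) :=
    isFiniteMeasure_withDensity_ofReal (hD.integrable_of_hasCompactSupport hDc).2
  have hνm : ν.real Set.univ = ∫ x, D x := by simpa using hint (continuous_const (y := (1 : ℝ)))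
  have : NeZero ν := ⟨fun h => hm.ne (by simpa [h] using hνm)⟩
  refine le_trans ?_ (integral_mul_divergence_comp_le hg (contDiff_knotheMap ν)
    (norm_knotheMap_le_one ν) hφ hc)
  rw [← integral_const_mul]
  have hdg : Continuous (deriv g) := (hg.contDiff (n := 1)).continuous_deriv le_rfl
  have hdiv : Continuous fun z => divergence (knotheMap ν) (g z) :=
    (continuous_divergence (contDiff_knotheMap ν)).comp hg.continuous
  have hρ : Continuous (mollifiedImageDensity g D 1) :=
    continuous_mollifiedImageDensity hg.continuous hD hDc 1
  refine integral_mono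
    (Continuous.integrable_of_hasCompactSupport ?_ hc.mul_right.mul_right.mul_left)
    (Continuous.integrable_of_hasCompactSupport ?_ hc.mul_right) fun z => ?_
  · have := hφ.continuous
    fun_prop
  · have := hφ.continuous
    fun_prop
  have hz := two_mul_sqrt_le_divergence_knotheMap ν (g z)
  have hmoll : ∫ ζ, logisticKernel (g z - ζ) ∂ν = mollifiedImageDensity g D 1 z := by
    rw [hint (by fun_prop)]
    simp [mollifiedImageDensity]
  rw [hmoll, hνm, Real.sqrt_mul (by positivity)] at hz
  calc _ = φ z * (2 * (√(Real.pi / ∫ x, D x) * √(mollifiedImageDensity g D 1 z))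
        * ‖deriv g z‖ ^ 2) := by ring
    _ ≤ _ := by gcongr; exact hφ0 z

lemma integral_mul_sqrt_mollifiedImageDensity_le (hg : Differentiable ℂ g) (hD : Continuous D)
    (hDc : HasCompactSupport D) (hD0 : 0 ≤ D) (hm : 0 < ∫ x, D x) {φ : ℂ → ℝ}
    (hφ : ContDiff ℝ 1 φ) (hc : HasCompactSupport φ) (hφ0 : 0 ≤ φ) {N : ℝ} (hN : 0 < N) :
    2 * √(Real.pi / ∫ x, D x) * ∫ z, φ z * √(mollifiedImageDensity g D N z) * ‖deriv g z‖ ^ 2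
      ≤ ∫ z, ‖fderiv ℝ φ z‖ * ‖deriv g z‖ := by
  have hscale := integral_mul_sqrt_mollifiedImageDensity_one_le (hg.const_mul (N : ℂ)) hD hDc hD0
    hm hφ hc hφ0
  have hdensity z : mollifiedImageDensity g D N z
      = N ^ 2 * mollifiedImageDensity (fun w => N * g w) D 1 z := by
    rw [mollifiedImageDensity, mollifiedImageDensity, ← integral_const_mul]
    refine integral_congr_ae (Eventually.of_forall fun x => ?_)
    simp only [Complex.ofReal_one, one_mul, one_pow, mul_one, mul_sub]
    ring
  simp only [deriv_const_mul _ (hg _), norm_mul, Complex.norm_real, Real.norm_of_nonneg hN.le]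
    at hscale
  simp only [hdensity, Real.sqrt_mul (sq_nonneg N), Real.sqrt_sq hN.le]
  refine le_of_mul_le_mul_left ?_ hN
  calc _ = _ := ?_
    _ ≤ _ := hscale
    _ = _ := ?_
  · rw [mul_left_comm, ← integral_const_mul]
    congr 2
    ext z
    ring
  · rw [← integral_const_mul]
    congr 1
    ext z
    ring

lemma ofReal_mollifiedImageDensity_eq_lintegral (hg : Continuous g) (hD : Continuous D)
    (hDc : HasCompactSupport D) (hD0 : 0 ≤ D) {N : ℝ} (hN : 0 < N) (z : ℂ) :
    ENNReal.ofReal (mollifiedImageDensity g D N z) = ∫⁻ y,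
      ENNReal.ofReal (logisticKernel (N * (g z - g (z + N⁻¹ • y))) * D (z + N⁻¹ • y)) := by
  have hint : Integrable fun x => logisticKernel (N * (g z - g x)) * D x :=
    (by fun_prop : Continuous _).integrable_of_hasCompactSupport hDc.mul_left
  rw [← ofReal_integral_eq_lintegral_ofReal
    ((hint.comp_add_left z).comp_smul (inv_ne_zero hN.ne'))
    (Eventually.of_forall fun y => mul_nonneg (logisticKernel_pos _).le (hD0 _)),
    Measure.integral_comp_smul volume
      (fun x => logisticKernel (N * (g z - g (z + x))) * D (z + x)) N⁻¹,
    integral_add_left_eq_self (μ := volume)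
      (fun x => logisticKernel (N * (g z - g x)) * D x) z,
    Complex.finrank_real_complex, inv_pow, inv_inv, abs_of_pos (by positivity), smul_eq_mul,
    ← integral_const_mul, mollifiedImageDensity]
  refine congrArg _ (integral_congr_ae (Eventually.of_forall fun x => ?_))
  ring

lemma tendsto_mul_sub_comp_add_inv_smul {z : ℂ} (hg : DifferentiableAt ℂ g z) {N : ℕ → ℝ}
    (hN : Tendsto N atTop atTop) (y : ℂ) :
    Tendsto (fun n => (N n : ℂ) * (g z - g (z + (N n)⁻¹ • y))) atTop (𝓝 (-deriv g z * y)) := by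
  have hline : HasDerivAt (fun t : ℝ => g (z + t • y)) (deriv g z * y) 0 :=
    (hg.hasDerivAt.hasFDerivAt.restrictScalars ℝ).hasLineDerivAt y |>.congr_deriv
      (by simp [mul_comm])
  have hinv : Tendsto (fun n => (N n)⁻¹) atTop (𝓝[≠] 0) :=
    tendsto_nhdsWithin_iff.2 ⟨tendsto_inv_atTop_zero.comp hN,
      (hN.eventually_ne_atTop 0).mono fun n hn => inv_ne_zero hn⟩
  rw [neg_mul]
  refine ((hline.tendsto_slope_zero.comp hinv).neg).congr fun n => ?_
  simp only [Function.comp_apply, zero_add, zero_smul, add_zero, inv_inv, Complex.real_smul]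
  ring

lemma le_liminf_ofReal_mollifiedImageDensity (hg : Differentiable ℂ g) (hD : Continuous D)
    (hDc : HasCompactSupport D) (hD0 : 0 ≤ D) {N : ℕ → ℝ} (hN0 : ∀ n, 0 < N n)
    (hN : Tendsto N atTop atTop) {z : ℂ} (hz : deriv g z ≠ 0) :
    ENNReal.ofReal (D z / ‖deriv g z‖ ^ 2)
      ≤ liminf (fun n => ENNReal.ofReal (mollifiedImageDensity g D (N n) z)) atTop := by
  have hgc := hg.continuous
  simp only [ofReal_mollifiedImageDensity_eq_lintegral hgc hD hDc hD0 (hN0 _)]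
  refine le_trans (le_of_eq ?_) (lintegral_liminf_le fun n =>
    (by fun_prop : Continuous _).measurable.ennreal_ofReal)
  have hpoint y : Tendsto (fun n => z + (N n)⁻¹ • y) atTop (𝓝 z) := by
    simpa using ((tendsto_inv_atTop_zero.comp hN).smul_const y).const_add z
  have hlim y : liminf (fun n => ENNReal.ofReal
      (logisticKernel (N n * (g z - g (z + (N n)⁻¹ • y))) * D (z + (N n)⁻¹ • y))) atTop
        = ENNReal.ofReal (D z) * ENNReal.ofReal (logisticKernel (-deriv g z * y)) := by
    rw [← ENNReal.ofReal_mul (hD0 z), mul_comm]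
    exact (ENNReal.tendsto_ofReal (((continuous_logisticKernel.tendsto _).comp
      (tendsto_mul_sub_comp_add_inv_smul (hg z) hN y)).mul
        ((hD.tendsto _).comp (hpoint y)))).liminf_eq
  have hmeas : Measurable fun w => ENNReal.ofReal (logisticKernel w) :=
    continuous_logisticKernel.measurable.ennreal_ofReal
  have hscale := lintegral_comp_mul_left_complex hmeas (neg_ne_zero.2 hz)
  rw [lintegral_logisticKernel, lintegral_mul_const' _ _ ENNReal.ofReal_ne_top, norm_neg]
    at hscale
  simp only [hlim]
  rw [lintegral_const_mul' _ _ ENNReal.ofReal_ne_top, ENNReal.ofReal_div_of_pos (by positivity),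
    ENNReal.div_eq_inv_mul, mul_comm, ENNReal.eq_inv_of_mul_eq_one_left hscale]

end MollifiedImageDensity

lemma ofReal_mul_sqrt_le_liminf {ρ : ℕ → ℝ} (hρ : ∀ n, 0 ≤ ρ n) {c t : ℝ} (hc : 0 ≤ c)
    (ht : 0 ≤ t) (h : ENNReal.ofReal t ≤ liminf (fun n => ENNReal.ofReal (ρ n)) atTop) :
    ENNReal.ofReal (c * √t) ≤ liminf (fun n => ENNReal.ofReal (c * √(ρ n))) atTop := by
  let F : ENNReal → ENNReal := fun x => ENNReal.ofReal c * x ^ (1 / 2 : ℝ)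
  have hmono : Monotone F := fun x y hxy => by
    dsimp only [F]
    gcongr
  have hcont : Continuous F :=
    (ENNReal.continuous_const_mul ENNReal.ofReal_ne_top).comp ENNReal.continuous_rpow_const
  have hF {s : ℝ} (hs : 0 ≤ s) : ENNReal.ofReal (c * √s) = F (ENNReal.ofReal s) := by
    rw [ENNReal.ofReal_mul hc, Real.sqrt_eq_rpow, ← ENNReal.ofReal_rpow_of_nonneg hs (by norm_num)]
  simp only [hF ht, hF (hρ _)]
  exact (hmono h).trans_eq (hmono.map_liminf_of_continuousAt _ hcont.continuousAt)

lemma ofReal_integral_mul_sqrt_le (hg : Differentiable ℂ g) {D : ℂ → ℝ} (hD : Continuous D)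
    (hDc : HasCompactSupport D) (hD0 : 0 ≤ D) {φ : ℂ → ℝ} (hφ : Continuous φ)
    (hc : HasCompactSupport φ) (hφ0 : 0 ≤ φ) {N : ℕ → ℝ} (hN0 : ∀ n, 0 < N n)
    (hN : Tendsto N atTop atTop) :
    ENNReal.ofReal (∫ z, φ z * √(D z) * ‖deriv g z‖) ≤ ∫⁻ z, liminf (fun n => ENNReal.ofReal
      (φ z * ‖deriv g z‖ ^ 2 * √(mollifiedImageDensity g D (N n) z))) atTop := by
  have hdg : Continuous (deriv g) := (hg.contDiff (n := 1)).continuous_deriv le_rfl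
  have hint : Integrable fun z => φ z * √(D z) * ‖deriv g z‖ :=
    (by fun_prop : Continuous _).integrable_of_hasCompactSupport hc.mul_right.mul_right
  rw [ofReal_integral_eq_lintegral_ofReal hint (Eventually.of_forall fun z =>
    mul_nonneg (mul_nonneg (hφ0 z) (Real.sqrt_nonneg _)) (norm_nonneg _))]
  refine lintegral_mono fun z => ?_
  rcases eq_or_ne (deriv g z) 0 with hz | hz
  · simp [hz]
  refine le_trans (le_of_eq (congrArg _ ?_)) <|
    ofReal_mul_sqrt_le_liminf (fun n => mollifiedImageDensity_nonneg hD0 _ z)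
      (mul_nonneg (hφ0 z) (sq_nonneg ‖deriv g z‖)) (div_nonneg (hD0 z) (by positivity))
      (le_liminf_ofReal_mollifiedImageDensity hg hD hDc hD0 hN0 hN hz)
  rw [Real.sqrt_div (hD0 z), Real.sqrt_sq (norm_nonneg _)]
  field_simp

lemma two_mul_sqrt_mul_integral_le (hg : Differentiable ℂ g) {D : ℂ → ℝ} (hD : Continuous D)
    (hDc : HasCompactSupport D) (hD0 : 0 ≤ D) (hm : 0 < ∫ x, D x) {φ : ℂ → ℝ}
    (hφ : ContDiff ℝ 1 φ) (hc : HasCompactSupport φ) (hφ0 : 0 ≤ φ) :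
    2 * √(Real.pi / ∫ x, D x) * ∫ z, φ z * √(D z) * ‖deriv g z‖
      ≤ ∫ z, ‖fderiv ℝ φ z‖ * ‖deriv g z‖ := by
  have hφ' := hφ.continuous
  have hdg : Continuous (deriv g) := (hg.contDiff (n := 1)).continuous_deriv le_rfl
  let N (n : ℕ) : ℝ := n + 1
  have hN0 n : 0 < N n := n.cast_add_one_pos
  have hN : Tendsto N atTop atTop :=
    tendsto_atTop_add_const_right _ 1 tendsto_natCast_atTop_atTop
  let f (n : ℕ) (z : ℂ) : ℝ := φ z * ‖deriv g z‖ ^ 2 * √(mollifiedImageDensity g D (N n) z)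
  have hf n : Continuous (f n) := by
    have := continuous_mollifiedImageDensity hg.continuous hD hDc (N n)
    fun_prop
  have hf0 n z : 0 ≤ f n z :=
    mul_nonneg (mul_nonneg (hφ0 z) (sq_nonneg _)) (Real.sqrt_nonneg _)
  have hupper n : ∫⁻ z, ENNReal.ofReal (f n z) ≤ ENNReal.ofReal
      ((∫ z, ‖fderiv ℝ φ z‖ * ‖deriv g z‖) / (2 * √(Real.pi / ∫ x, D x))) := by
    rw [← ofReal_integral_eq_lintegral_ofReal ((hf n).integrable_of_hasCompactSupport
      hc.mul_right.mul_right) (Eventually.of_forall (hf0 n))]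
    refine ENNReal.ofReal_le_ofReal ((le_div_iff₀' (by positivity)).2 ?_)
    simpa only [f, mul_right_comm] using integral_mul_sqrt_mollifiedImageDensity_le hg hD hDc hD0
      hm hφ hc hφ0 (hN0 n)
  have hfatou := (ofReal_integral_mul_sqrt_le hg hD hDc hD0 hφ' hc hφ0 hN0 hN).trans <|
    (lintegral_liminf_le fun n => (hf n).measurable.ennreal_ofReal).trans
      (liminf_le_of_frequently_le' (Frequently.of_forall hupper))
  rwa [ENNReal.ofReal_le_ofReal_iff (by positivity), le_div_iff₀' (by positivity)] at hfatou

theorem weighted_isoperimetric (hg : Differentiable ℂ g) {φ : ℂ → ℝ} (hφ : ContDiff ℝ 1 φ)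
    (hc : HasCompactSupport φ) (hφ0 : 0 ≤ φ) :
    4 * Real.pi * ∫ z, φ z ^ 2 * ‖deriv g z‖ ^ 2 ≤ (∫ z, ‖fderiv ℝ φ z‖ * ‖deriv g z‖) ^ 2 := by
  have hm0 : 0 ≤ ∫ z, φ z ^ 2 * ‖deriv g z‖ ^ 2 := integral_nonneg fun z => by positivity
  rcases hm0.eq_or_lt with hm | hm
  · rw [← hm, mul_zero]
    positivity
  have hφ' := hφ.continuous
  have hdg : Continuous (deriv g) := (hg.contDiff (n := 1)).continuous_deriv le_rfl
  have hD : Continuous fun z => φ z ^ 2 * ‖deriv g z‖ ^ 2 := by fun_prop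
  have hle := two_mul_sqrt_mul_integral_le hg hD
    (hc.comp_left (g := (· ^ 2)) (by simp)).mul_right (fun x => by positivity) hm hφ hc hφ0
  have hsqrt z : φ z * √(φ z ^ 2 * ‖deriv g z‖ ^ 2) * ‖deriv g z‖
      = φ z ^ 2 * ‖deriv g z‖ ^ 2 := by
    rw [← mul_pow, Real.sqrt_sq (mul_nonneg (hφ0 z) (norm_nonneg _))]
    ring
  simp only [hsqrt] at hle
  refine le_trans (le_of_eq ?_) (pow_le_pow_left₀ (by positivity) hle 2)
  rw [mul_pow, mul_pow, Real.sq_sqrt (by positivity)]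
  field_simp
  ring

end WeightedIsoperimetric

section SmoothLevel

/-- A smooth approximation, for small `δ > 0`, of the indicator function of the superlevel set
`{t < W}`: it is `0` where `W ≤ t` and `1` where `t + δ ≤ W`. -/
noncomputable def smoothLevel {X : Type*} (W : X → ℝ) (δ t : ℝ) (z : X) : ℝ :=
  Real.smoothTransition ((W z - t) / δ)

/-- Minus the derivative of `smoothLevel W δ t` in `t`, an approximation of the Dirac mass at `t`
composed with `W`. -/
noncomputable def smoothLevelDensity {X : Type*} (W : X → ℝ) (δ t : ℝ) (z : X) : ℝ :=
  deriv Real.smoothTransition ((W z - t) / δ) / δ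

variable {X : Type*} {W : X → ℝ} {δ t : ℝ} {z : X}

lemma smoothLevel_nonneg : 0 ≤ smoothLevel W δ t z := Real.smoothTransition.nonneg _

lemma smoothLevel_le_one : smoothLevel W δ t z ≤ 1 := Real.smoothTransition.le_one _

lemma smoothLevel_eq_zero (hδ : 0 < δ) (h : W z ≤ t) : smoothLevel W δ t z = 0 :=
  Real.smoothTransition.zero_of_nonpos (div_nonpos_of_nonpos_of_nonneg (sub_nonpos.2 h) hδ.le)

lemma smoothLevel_eq_one (hδ : 0 < δ) (h : t + δ ≤ W z) : smoothLevel W δ t z = 1 :=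
  Real.smoothTransition.one_of_one_le ((one_le_div hδ).2 (by linarith))

lemma smoothLevel_add_le_sq (hδ : 0 < δ) :
    smoothLevel W δ (t + δ) z ≤ smoothLevel W δ t z ^ 2 := by
  rcases le_total (W z) (t + δ) with h | h
  · rw [smoothLevel_eq_zero hδ h]
    positivity
  · rw [smoothLevel_eq_one (t := t) hδ h, one_pow]
    exact smoothLevel_le_one

lemma smoothLevelDensity_nonneg (hδ : 0 < δ) : 0 ≤ smoothLevelDensity W δ t z :=
  div_nonneg Real.smoothTransition.monotone.deriv_nonneg hδ.le

lemma deriv_smoothTransition_eq_zero {x : ℝ} (hx : x ∉ Set.Icc 0 1) :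
    deriv Real.smoothTransition x = 0 := by
  rw [Set.mem_Icc, not_and_or, not_le, not_le] at hx
  obtain ⟨c, hc⟩ : ∃ c : ℝ, Real.smoothTransition =ᶠ[nhds x] fun _ => c := by
    rcases hx with hx | hx
    · exact ⟨0, eventually_of_mem (Iio_mem_nhds hx) fun y hy =>
        Real.smoothTransition.zero_of_nonpos (le_of_lt hy)⟩
    · exact ⟨1, eventually_of_mem (Ioi_mem_nhds hx) fun y hy =>
        Real.smoothTransition.one_of_one_le (le_of_lt hy)⟩
  rw [hc.deriv_eq, deriv_const]

lemma continuous_deriv_smoothTransition : Continuous (deriv Real.smoothTransition) :=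
  (Real.smoothTransition.contDiff (n := 1)).continuous_deriv le_rfl

lemma exists_abs_deriv_smoothTransition_le : ∃ C, ∀ x, |deriv Real.smoothTransition x| ≤ C := by
  have hsupp : HasCompactSupport (deriv Real.smoothTransition) :=
    HasCompactSupport.intro isCompact_Icc fun x hx => deriv_smoothTransition_eq_zero hx
  exact hsupp.exists_bound_of_continuous continuous_deriv_smoothTransition

lemma smoothLevelDensity_eq_zero (hδ : 0 < δ) (h : W z ∉ Set.Icc t (t + δ)) :
    smoothLevelDensity W δ t z = 0 := by
  rw [smoothLevelDensity, deriv_smoothTransition_eq_zero, zero_div]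
  rw [Set.mem_Icc, not_and_or, not_le, not_le] at h ⊢
  exact h.imp (fun h => div_neg_of_neg_of_pos (by linarith) hδ)
    fun h => (one_lt_div hδ).2 (by linarith)

lemma hasDerivAt_smoothTransition (x : ℝ) :
    HasDerivAt Real.smoothTransition (deriv Real.smoothTransition x) x :=
  (Real.smoothTransition.contDiff (n := 1).differentiable one_ne_zero x).hasDerivAt

lemma hasDerivAt_smoothLevel (W : X → ℝ) (δ t : ℝ) (z : X) :
    HasDerivAt (fun s => smoothLevel W δ s z) (-smoothLevelDensity W δ t z) t := by
  have hinner : HasDerivAt (fun s => (W z - s) / δ) (-1 / δ) t :=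
    ((hasDerivAt_id t).const_sub (W z)).div_const δ
  refine ((hasDerivAt_smoothTransition _).comp t hinner).congr_deriv ?_
  rw [smoothLevelDensity]
  ring

section Topology

variable [TopologicalSpace X]

lemma continuous_smoothLevel (hW : Continuous W) (δ t : ℝ) : Continuous (smoothLevel W δ t) :=
  Real.smoothTransition.continuous.comp ((hW.sub continuous_const).div_const δ)

lemma continuous_smoothLevelDensity (hW : Continuous W) (δ t : ℝ) :
    Continuous (smoothLevelDensity W δ t) :=
  (continuous_deriv_smoothTransition.comp ((hW.sub continuous_const).div_const δ)).div_const δ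

lemma hasDerivAt_setIntegral_smoothLevel_mul [T2Space X] [MeasurableSpace X]
    [OpensMeasurableSpace X] (μ : Measure X) [IsFiniteMeasureOnCompacts μ] (hW : Continuous W)
    {K : Set X} (hK : IsCompact K) {F : X → ℝ} (hF : Continuous F) (δ t : ℝ) :
    HasDerivAt (fun t => ∫ z in K, smoothLevel W δ t z * F z ∂μ)
      (-∫ z in K, smoothLevelDensity W δ t z * F z ∂μ) t := by
  obtain ⟨C, hC⟩ := exists_abs_deriv_smoothTransition_le
  have hint {G : X → ℝ} (hG : Continuous G) : Integrable G (μ.restrict K) :=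
    hG.continuousOn.integrableOn_compact hK
  have hlevel := continuous_smoothLevel hW δ
  have hdensity := continuous_smoothLevelDensity hW δ
  have hderiv := (hasDerivAt_integral_of_dominated_loc_of_deriv_le (μ := μ.restrict K)
    (F := fun t z => smoothLevel W δ t z * F z)
    (F' := fun t z => -smoothLevelDensity W δ t z * F z) (x₀ := t) (s := Set.univ)
    (bound := fun z => C / |δ| * ‖F z‖) univ_mem
    (Eventually.of_forall fun s => ((hlevel s).mul hF).aestronglyMeasurable)
    (hint ((hlevel t).mul hF)) ((hdensity t).neg.mul hF).aestronglyMeasurable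
    (Eventually.of_forall fun z s _ => ?_) (hint (by fun_prop))
    (Eventually.of_forall fun z s _ => (hasDerivAt_smoothLevel W δ s z).mul_const (F z))).2
  · simpa only [neg_mul, integral_neg] using hderiv
  · rw [norm_mul, norm_neg, smoothLevelDensity, norm_div, Real.norm_eq_abs, Real.norm_eq_abs δ]
    gcongr
    exact hC _

lemma hasCompactSupport_smoothLevel [R1Space X] (hK : IsCompact {z | 0 ≤ W z}) (hδ : 0 < δ)
    (ht : 0 ≤ t) : HasCompactSupport (smoothLevel W δ t) :=
  HasCompactSupport.intro hK fun _ hz => smoothLevel_eq_zero hδ ((not_le.1 hz).le.trans ht)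

lemma hasCompactSupport_smoothLevelDensity [R1Space X] (hK : IsCompact {z | 0 ≤ W z})
    (hδ : 0 < δ) (ht : 0 ≤ t) : HasCompactSupport (smoothLevelDensity W δ t) :=
  HasCompactSupport.intro hK fun _ hz =>
    smoothLevelDensity_eq_zero hδ fun h => hz (ht.trans h.1)

end Topology

variable {E : Type*} [NormedAddCommGroup E] [NormedSpace ℝ E] {u : E → ℝ}

lemma contDiff_smoothLevel {n : ℕ∞} (hu : ContDiff ℝ n u) (δ t : ℝ) :
    ContDiff ℝ n (smoothLevel u δ t) :=
  Real.smoothTransition.contDiff.comp ((hu.sub contDiff_const).div_const δ)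

lemma fderiv_smoothLevel {x : E} (hu : DifferentiableAt ℝ u x) (δ t : ℝ) :
    fderiv ℝ (smoothLevel u δ t) x = smoothLevelDensity u δ t x • fderiv ℝ u x := by
  have hinner : HasFDerivAt (fun y => (u y - t) / δ) (δ⁻¹ • fderiv ℝ u x) x := by
    simpa only [div_eq_inv_mul] using (hu.hasFDerivAt.sub_const t).const_mul δ⁻¹
  refine ((hasDerivAt_smoothTransition _).comp_hasFDerivAt x hinner).fderiv.trans ?_
  rw [smul_smul]
  rfl

end SmoothLevel

lemma sq_integral_mul_mul_le {α : Type*} [MeasurableSpace α] {μ : Measure α} {w A B : α → ℝ}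
    (hw : 0 ≤ w) (hA : Integrable (fun x => w x * A x ^ 2) μ)
    (hAB : Integrable (fun x => w x * (A x * B x)) μ)
    (hB : Integrable (fun x => w x * B x ^ 2) μ) :
    (∫ x, w x * (A x * B x) ∂μ) ^ 2 ≤ (∫ x, w x * A x ^ 2 ∂μ) * ∫ x, w x * B x ^ 2 ∂μ := by
  have hquad (s : ℝ) : 0 ≤ (∫ x, w x * A x ^ 2 ∂μ) * (s * s)
      + (2 * ∫ x, w x * (A x * B x) ∂μ) * s + ∫ x, w x * B x ^ 2 ∂μ := by
    calc 0 ≤ ∫ x, w x * (s * A x + B x) ^ 2 ∂μ :=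
          integral_nonneg fun x => mul_nonneg (hw x) (sq_nonneg _)
      _ = ∫ x, (s * s * (w x * A x ^ 2) + 2 * s * (w x * (A x * B x))) + w x * B x ^ 2 ∂μ := by
          congr 1 with x
          ring
      _ = _ := by
          have hsum := (hA.const_mul (s * s)).add (hAB.const_mul (2 * s))
          refine (integral_add hsum hB).trans ?_
          rw [integral_add' (hA.const_mul _) (hAB.const_mul _), integral_const_mul,
            integral_const_mul]
          ring
  have hdiscrim := discrim_le_zero hquad
  rw [discrim] at hdiscrim
  linarith

section MassProfile

/-- The lower bound that a mass `f` imposes on the area: if `-ΔW = V e^W |g'|²` with `a ≤ V ≤ b`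
and `g` entire, the `|g'|²`-area of `{0 < W}` is at least `massProfile a b f`, where `f` is the
integral of `-ΔW` over that set. -/
noncomputable def massProfile (a b f : ℝ) : ℝ :=
  2 * Real.pi / b
    - (max (4 * Real.pi - f) 0 ^ 2 / b + max (f - 4 * Real.pi) 0 ^ 2 / a) / (8 * Real.pi)

/-- The derivative of `massProfile a b`. -/
noncomputable def massProfileDeriv (a b f : ℝ) : ℝ :=
  (max (4 * Real.pi - f) 0 / b - max (f - 4 * Real.pi) 0 / a) / (4 * Real.pi)

lemma hasDerivAt_max_zero_sq (x : ℝ) :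
    HasDerivAt (fun x : ℝ => max x 0 ^ 2) (2 * max x 0) x := by
  rcases lt_trichotomy x 0 with hx | rfl | hx
  · rw [max_eq_right hx.le, mul_zero]
    refine (hasDerivAt_const x 0).congr_of_eventuallyEq ?_
    filter_upwards [Iio_mem_nhds hx] with y hy
    rw [max_eq_right (le_of_lt hy), zero_pow two_ne_zero]
  · rw [max_self, mul_zero]
    refine HasDerivAt.of_isLittleO (Asymptotics.IsBigO.trans_isLittleO
      (Asymptotics.IsBigO.of_norm_le (g := fun y : ℝ => y ^ 2) fun y => ?_)
      (by simpa using Asymptotics.isLittleO_pow_id (𝕜 := ℝ) one_lt_two))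
    rw [max_self, smul_zero, sub_zero, zero_pow two_ne_zero, sub_zero, norm_pow, ← sq_abs y]
    gcongr
    simpa using abs_max_le_max_abs_abs (a := y) (b := 0)
  · rw [max_eq_left hx.le]
    have hpow : HasDerivAt (fun x : ℝ => x ^ 2) (2 * x) x := by simpa using hasDerivAt_pow 2 x
    refine hpow.congr_of_eventuallyEq ?_
    filter_upwards [Ioi_mem_nhds hx] with y hy
    rw [max_eq_left (le_of_lt hy)]

lemma hasDerivAt_massProfile (a b f : ℝ) :
    HasDerivAt (massProfile a b) (massProfileDeriv a b f) f := by
  have hlow := (hasDerivAt_max_zero_sq (4 * Real.pi - f)).comp f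
    ((hasDerivAt_id f).const_sub (4 * Real.pi))
  have hhigh := (hasDerivAt_max_zero_sq (f - 4 * Real.pi)).comp f
    ((hasDerivAt_id f).sub_const (4 * Real.pi))
  refine ((((hlow.div_const b).add (hhigh.div_const a)).div_const (8 * Real.pi)).const_sub
    (2 * Real.pi / b)).congr_deriv ?_
  rw [massProfileDeriv]
  field

lemma continuous_massProfile (a b : ℝ) : Continuous (massProfile a b) :=
  continuous_iff_continuousAt.2 fun f => (hasDerivAt_massProfile a b f).continuousAt

lemma massProfile_zero (a b : ℝ) : massProfile a b 0 = 0 := by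
  have := Real.pi_pos
  rw [massProfile, max_eq_left (by linarith), max_eq_right (by linarith)]
  field

lemma massProfileDeriv_of_le {a b f : ℝ} (hf : f ≤ 4 * Real.pi) :
    massProfileDeriv a b f = (1 - f / (4 * Real.pi)) / b := by
  rw [massProfileDeriv, max_eq_left (by linarith), max_eq_right (by linarith)]
  field

lemma massProfileDeriv_of_ge {a b f : ℝ} (hf : 4 * Real.pi ≤ f) :
    massProfileDeriv a b f = (1 - f / (4 * Real.pi)) / a := by
  rw [massProfileDeriv, max_eq_right (by linarith), max_eq_left (by linarith)]
  field

lemma massProfileDeriv_mul_le {a b f F Y q : ℝ} (ha : 0 < a) (hb : 0 < b) (hf : 0 ≤ f)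
    (hY : 0 ≤ Y) (hq : 1 ≤ q) (hlow : a * Y ≤ F) (hupp : F ≤ b * (q * Y)) :
    massProfileDeriv a b f * F ≤ (1 - f / (4 * Real.pi)) * Y + (q - 1) * Y := by
  have hgap : 0 ≤ (q - 1) * Y := mul_nonneg (sub_nonneg.2 hq) hY
  rcases le_total f (4 * Real.pi) with h | h
  · have hcoef : 0 ≤ 1 - f / (4 * Real.pi) := by
      rwa [sub_nonneg, div_le_one (by positivity)]
    calc massProfileDeriv a b f * F ≤ (1 - f / (4 * Real.pi)) / b * (b * (q * Y)) := by
          rw [massProfileDeriv_of_le h]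
          gcongr
      _ = (1 - f / (4 * Real.pi)) * Y + (1 - f / (4 * Real.pi)) * ((q - 1) * Y) := by
          field
      _ ≤ _ := by
          exact add_le_add_right
            (mul_le_of_le_one_left hgap (sub_le_self _ (by positivity))) _
  · have hcoef : 1 - f / (4 * Real.pi) ≤ 0 := by
      rwa [sub_nonpos, one_le_div (by positivity)]
    calc massProfileDeriv a b f * F ≤ (1 - f / (4 * Real.pi)) / a * (a * Y) := by
          rw [massProfileDeriv_of_ge h]
          exact mul_le_mul_of_nonpos_left hlow (div_nonpos_of_nonpos_of_nonneg hcoef ha.le)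
      _ = (1 - f / (4 * Real.pi)) * Y := by field
      _ ≤ _ := le_add_of_nonneg_right hgap

end MassProfile

lemma hasDerivAt_integral_translate {H : ℝ → ℝ} (hH : Continuous H) (δ t : ℝ) :
    HasDerivAt (fun t => ∫ s in t..t + δ, H s) (H (t + δ) - H t) t := by
  have hprim u : HasDerivAt (fun u => ∫ s in (0 : ℝ)..u, H s) (H u) u :=
    (hH.integral_hasStrictDerivAt 0 u).hasDerivAt
  refine (((hprim (t + δ)).comp_add_const t δ).sub (hprim t)).congr_of_eventuallyEq
    (Eventually.of_forall fun u => ?_)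
  exact (intervalIntegral.integral_interval_sub_left (hH.intervalIntegrable _ _)
    (hH.intervalIntegrable _ _)).symm

section LevelSetComparison

variable {a b δ T : ℝ}

lemma levelSet_deriv_nonpos {t H H₁ f y F : ℝ} (ha : 0 < a) (hb : 0 < b) (hδ : 0 ≤ δ)
    (ht : t ≤ T) (hf : 0 ≤ f) (hy : 0 ≤ y) (hH : H₁ ≤ H) (hiso : 4 * Real.pi * H₁ ≤ f * y)
    (hlow : a * (Real.exp t * y) ≤ F) (hupp : F ≤ b * (Real.exp δ * (Real.exp t * y))) :
    Real.exp t * H - Real.exp t * y + massProfileDeriv a b f * F + Real.exp T * (H₁ - H)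
      - (Real.exp δ - 1) * Real.exp T * y ≤ 0 := by
  have hexp : Real.exp t ≤ Real.exp T := Real.exp_le_exp.2 ht
  have hδ1 : 0 ≤ Real.exp δ - 1 := sub_nonneg.2 (Real.one_le_exp hδ)
  have hprofile := massProfileDeriv_mul_le ha hb hf (by positivity) (Real.one_le_exp hδ) hlow hupp
  have hiso' : Real.exp t * H₁ ≤ f / (4 * Real.pi) * (Real.exp t * y) := by
    calc Real.exp t * H₁ = Real.exp t * (4 * Real.pi * H₁) / (4 * Real.pi) := by field
      _ ≤ Real.exp t * (f * y) / (4 * Real.pi) := by gcongr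
      _ = f / (4 * Real.pi) * (Real.exp t * y) := by ring
  have hdrop : Real.exp t * (H - H₁) ≤ Real.exp T * (H - H₁) := by gcongr
  have herror : (Real.exp δ - 1) * (Real.exp t * y) ≤ (Real.exp δ - 1) * (Real.exp T * y) := by
    gcongr
  linarith

-- `e^t H - massProfile f` decreases up to errors of order `δ`, absorbed by the other two terms.
lemma massProfile_le_of_hasDerivAt {H f y F : ℝ → ℝ} (ha : 0 < a) (hb : 0 < b) (hδ : 0 ≤ δ)
    (hT : 0 ≤ T) (hH : ∀ t, HasDerivAt H (-y t) t) (hf : ∀ t, HasDerivAt f (-F t) t)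
    (hf0 : ∀ t, 0 ≤ f t) (hy0 : ∀ t, 0 ≤ y t)
    (hiso : ∀ t, 0 ≤ t → 4 * Real.pi * H (t + δ) ≤ f t * y t)
    (hlow : ∀ t, a * (Real.exp t * y t) ≤ F t)
    (hupp : ∀ t, F t ≤ b * (Real.exp δ * (Real.exp t * y t)))
    (hHT : ∀ t, T ≤ t → H t = 0) (hfT : f T = 0) :
    massProfile a b (f 0) ≤ (1 + Real.exp T * (δ + (Real.exp δ - 1))) * H 0 := by
  have hHanti : Antitone H := antitone_of_hasDerivAt_nonpos hH fun t => neg_nonpos.2 (hy0 t)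
  have hHcont : Continuous H := continuous_iff_continuousAt.2 fun t => (hH t).continuousAt
  let Φ (t : ℝ) : ℝ := Real.exp t * H t - massProfile a b (f t)
    + Real.exp T * (∫ s in t..t + δ, H s) + (Real.exp δ - 1) * Real.exp T * H t
  have hΦ t := ((((Real.hasDerivAt_exp t).mul (hH t)).sub
    ((hasDerivAt_massProfile a b (f t)).comp t (hf t))).add
      ((hasDerivAt_integral_translate hHcont δ t).const_mul (Real.exp T))).add
        ((hH t).const_mul ((Real.exp δ - 1) * Real.exp T))
  have hΦanti : AntitoneOn Φ (Set.Icc 0 T) := by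
    refine antitoneOn_of_hasDerivWithinAt_nonpos (convex_Icc 0 T)
      (continuous_iff_continuousAt.2 fun t => (hΦ t).continuousAt).continuousOn
      (fun t _ => (hΦ t).hasDerivWithinAt) fun t ht => ?_
    rw [interior_Icc] at ht
    have := levelSet_deriv_nonpos ha hb hδ ht.2.le (hf0 t) (hy0 t)
      (hHanti (le_add_of_nonneg_right hδ)) (hiso t ht.1.le) (hlow t) (hupp t)
    linarith
  have hΦT : Φ T = 0 := by
    have hint : ∫ s in T..T + δ, H s = 0 := by
      refine (intervalIntegral.integral_congr fun s hs => hHT s ?_).trans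
        intervalIntegral.integral_zero
      exact (Set.uIcc_of_le (le_add_of_nonneg_right hδ) ▸ hs).1
    simp only [Φ, hHT T le_rfl, hfT, hint, massProfile_zero, mul_zero, sub_zero, add_zero]
  have hint : ∫ s in (0 : ℝ)..δ, H s ≤ δ * H 0 := by
    simpa using intervalIntegral.integral_mono_on hδ (hHcont.intervalIntegrable 0 δ)
      (intervalIntegrable_const (μ := volume) (c := H 0)) fun s hs => hHanti hs.1
  have hmono := hΦanti (Set.left_mem_Icc.2 hT) (Set.right_mem_Icc.2 hT) hT
  simp only [hΦT, Φ, zero_add, Real.exp_zero, one_mul] at hmono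
  linarith [mul_le_mul_of_nonneg_left hint (Real.exp_pos T).le]

section Plane

open scoped Laplacian

variable {g : ℂ → ℂ} {W : ℂ → ℝ}

lemma continuous_laplacian {E : Type*} [NormedAddCommGroup E] [InnerProductSpace ℝ E]
    [FiniteDimensional ℝ E] {W : E → ℝ} (hW : ContDiff ℝ 2 W) : Continuous (Δ W) := by
  have hΔ : Δ W = divergence (gradient W) := funext fun x => (divergence_gradient hW x).symm
  rw [hΔ]
  exact continuous_divergence (contDiff_gradient hW)

lemma integral_smoothLevelDensity_mul_sq_norm_fderiv {E : Type*} [NormedAddCommGroup E]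
    [InnerProductSpace ℝ E] [FiniteDimensional ℝ E] [MeasurableSpace E] [BorelSpace E]
    (μ : Measure E) [μ.IsAddHaarMeasure] {W : E → ℝ} (hW : ContDiff ℝ 2 W)
    (hK : IsCompact {x | 0 ≤ W x}) (hδ : 0 < δ) {t : ℝ} (ht : 0 ≤ t) :
    ∫ x, smoothLevelDensity W δ t x * ‖fderiv ℝ W x‖ ^ 2 ∂μ
      = ∫ x, smoothLevel W δ t x * -Δ W x ∂μ := by
  have hgreen := integral_mul_divergence_eq_neg μ
    (contDiff_smoothLevel (n := 1) (hW.of_le one_le_two) δ t)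
    (hasCompactSupport_smoothLevel hK hδ ht) (contDiff_gradient hW)
  simp only [divergence_gradient hW, fderiv_smoothLevel (hW.differentiable two_ne_zero _),
    smul_apply, fderiv_apply_gradient, smul_eq_mul] at hgreen
  simp only [mul_neg, integral_neg, hgreen, neg_neg]

lemma integral_smoothLevel_sq_mul_le (hW : ContDiff ℝ 2 W) (hK : IsCompact {z | 0 ≤ W z})
    (hg : Differentiable ℂ g) (hδ : 0 < δ) {t : ℝ} (ht : 0 ≤ t) :
    4 * Real.pi * ∫ z, smoothLevel W δ t z ^ 2 * ‖deriv g z‖ ^ 2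
      ≤ (∫ z, smoothLevel W δ t z * -Δ W z)
        * ∫ z, smoothLevelDensity W δ t z * ‖deriv g z‖ ^ 2 := by
  have hW' : Continuous (fderiv ℝ W) := hW.continuous_fderiv two_ne_zero
  have hg' : Continuous (deriv g) := (hg.contDiff (n := 1)).continuous_deriv le_rfl
  have hiso := weighted_isoperimetric hg (contDiff_smoothLevel (n := 1) (hW.of_le one_le_two) δ t)
    (hasCompactSupport_smoothLevel hK hδ ht) fun _ => smoothLevel_nonneg
  have hint {G : ℂ → ℝ} (hG : Continuous G) :
      Integrable fun z => smoothLevelDensity W δ t z * G z :=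
    ((continuous_smoothLevelDensity hW.continuous δ t).mul hG).integrable_of_hasCompactSupport
      (hasCompactSupport_smoothLevelDensity hK hδ ht).mul_right
  have hcs := sq_integral_mul_mul_le (w := smoothLevelDensity W δ t)
    (fun _ => smoothLevelDensity_nonneg hδ) (hint (hW'.norm.pow 2)) (hint (hW'.norm.mul hg'.norm))
    (hint (hg'.norm.pow 2))
  rw [integral_smoothLevelDensity_mul_sq_norm_fderiv volume hW hK hδ ht] at hcs
  simp only [fderiv_smoothLevel (hW.differentiable two_ne_zero _), norm_smul,
    Real.norm_of_nonneg (smoothLevelDensity_nonneg hδ), mul_assoc] at hiso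
  simpa only [mul_assoc] using hiso.trans hcs

end Plane
end LevelSetComparison

section LevelSetIntegrals

variable {X : Type*} [TopologicalSpace X] [MeasurableSpace X] [OpensMeasurableSpace X]
  {μ : Measure X} [IsFiniteMeasureOnCompacts μ] {W w ρ : X → ℝ} {K : Set X} {c δ : ℝ}

lemma setIntegral_indicator_pos (hW : Continuous W) (μ : Measure X) (w : X → ℝ) :
    ∫ z in {z | 0 ≤ W z}, {z | 0 < W z}.indicator w z ∂μ = ∫ z in {z | 0 < W z}, w z ∂μ := by
  have hsub : {z | 0 < W z} ⊆ {z | 0 ≤ W z} := fun z (hz : 0 < W z) => hz.le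
  rw [setIntegral_indicator (isOpen_lt continuous_const hW).measurableSet,
    Set.inter_eq_right.2 hsub]

variable [T2Space X]

lemma setIntegral_smoothLevelDensity_mul_mono (hK : IsCompact K) (hW : Continuous W)
    (hw : Continuous w) (hρ : Continuous ρ) (hδ : 0 < δ) {t : ℝ}
    (h : ∀ z ∈ K, W z ∈ Set.Icc t (t + δ) → w z ≤ ρ z) :
    ∫ z in K, smoothLevelDensity W δ t z * w z ∂μ
      ≤ ∫ z in K, smoothLevelDensity W δ t z * ρ z ∂μ := by
  have hD := continuous_smoothLevelDensity hW δ t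
  refine setIntegral_mono_on ((hD.mul hw).continuousOn.integrableOn_compact hK)
    ((hD.mul hρ).continuousOn.integrableOn_compact hK) hK.measurableSet fun z hz => ?_
  by_cases hWz : W z ∈ Set.Icc t (t + δ)
  · exact mul_le_mul_of_nonneg_left (h z hz hWz) (smoothLevelDensity_nonneg hδ)
  · simp only [smoothLevelDensity_eq_zero hδ hWz, zero_mul, le_refl]

lemma mul_exp_mul_setIntegral_smoothLevelDensity_le (hK : IsCompact K) (hW : Continuous W)
    (hw : Continuous w) (hρ : Continuous ρ) (hδ : 0 < δ) (hc : 0 ≤ c) (hw0 : 0 ≤ w)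
    (h : ∀ z ∈ K, c * (Real.exp (W z) * w z) ≤ ρ z) (t : ℝ) :
    c * (Real.exp t * ∫ z in K, smoothLevelDensity W δ t z * w z ∂μ)
      ≤ ∫ z in K, smoothLevelDensity W δ t z * ρ z ∂μ := by
  rw [← mul_assoc, ← integral_const_mul]
  simp only [mul_left_comm (c * Real.exp t)]
  refine setIntegral_smoothLevelDensity_mul_mono hK hW (by fun_prop) hρ hδ fun z hz hWz =>
    le_trans ?_ (h z hz)
  have := hw0 z
  rw [mul_assoc]
  gcongr
  exact hWz.1

lemma setIntegral_smoothLevelDensity_le_mul_exp_mul (hK : IsCompact K) (hW : Continuous W)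
    (hw : Continuous w) (hρ : Continuous ρ) (hδ : 0 < δ) (hc : 0 ≤ c) (hw0 : 0 ≤ w)
    (h : ∀ z ∈ K, ρ z ≤ c * (Real.exp (W z) * w z)) (t : ℝ) :
    ∫ z in K, smoothLevelDensity W δ t z * ρ z ∂μ
      ≤ c * (Real.exp δ * (Real.exp t * ∫ z in K, smoothLevelDensity W δ t z * w z ∂μ)) := by
  rw [← mul_assoc (Real.exp δ), ← Real.exp_add, ← mul_assoc, ← integral_const_mul]
  simp only [mul_left_comm (c * Real.exp (δ + t))]
  refine setIntegral_smoothLevelDensity_mul_mono hK hW hρ (by fun_prop) hδ fun z hz hWz =>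
    (h z hz).trans ?_
  have := hw0 z
  rw [mul_assoc]
  gcongr
  exact hWz.2.trans_eq (add_comm _ _)

lemma setIntegral_smoothLevel_zero_mul_le (hK : IsCompact {z | 0 ≤ W z}) (hW : Continuous W)
    (hw : Continuous w) (hδ : 0 < δ) (hw0 : 0 ≤ w) :
    ∫ z in {z | 0 ≤ W z}, smoothLevel W δ 0 z * w z ∂μ ≤ ∫ z in {z | 0 < W z}, w z ∂μ := by
  have hmeas : MeasurableSet {z | 0 < W z} := (isOpen_lt continuous_const hW).measurableSet
  have hle z : smoothLevel W δ 0 z * w z ≤ {z | 0 < W z}.indicator w z := by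
    by_cases hz : 0 < W z
    · rw [Set.indicator_of_mem (show z ∈ {z | 0 < W z} from hz)]
      exact mul_le_of_le_one_left (hw0 z) smoothLevel_le_one
    · rw [Set.indicator_of_notMem (show z ∉ {z | 0 < W z} from hz),
        smoothLevel_eq_zero hδ (not_lt.1 hz), zero_mul]
  refine (setIntegral_mono
    (((continuous_smoothLevel hW δ 0).mul hw).continuousOn.integrableOn_compact hK)
    (IntegrableOn.indicator (hw.continuousOn.integrableOn_compact hK) hmeas) hle).trans_eq
    (setIntegral_indicator_pos hW μ w)

lemma tendsto_setIntegral_smoothLevel_mul (hK : IsCompact {z | 0 ≤ W z}) (hW : Continuous W)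
    (hw : Continuous w) :
    Tendsto (fun δ => ∫ z in {z | 0 ≤ W z}, smoothLevel W δ 0 z * w z ∂μ) (nhdsWithin 0 (Set.Ioi 0))
      (nhds (∫ z in {z | 0 < W z}, w z ∂μ)) := by
  rw [← setIntegral_indicator_pos hW μ w]
  refine tendsto_integral_filter_of_dominated_convergence (fun z => ‖w z‖)
    (Eventually.of_forall fun δ => ((continuous_smoothLevel hW δ 0).mul hw).aestronglyMeasurable)
    (Eventually.of_forall fun δ => Eventually.of_forall fun z => ?_)
    (hw.norm.continuousOn.integrableOn_compact hK) (Eventually.of_forall fun z => ?_)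
  · rw [norm_mul, Real.norm_of_nonneg smoothLevel_nonneg]
    exact mul_le_of_le_one_left (norm_nonneg _) smoothLevel_le_one
  · refine tendsto_const_nhds.congr' ?_
    by_cases hz : 0 < W z
    · filter_upwards [Ioo_mem_nhdsGT hz] with δ hδ
      rw [Set.indicator_of_mem (show z ∈ {z | 0 < W z} from hz),
        smoothLevel_eq_one hδ.1 (by linarith [hδ.2]), one_mul]
    · filter_upwards [self_mem_nhdsWithin] with δ hδ
      rw [Set.indicator_of_notMem (show z ∉ {z | 0 < W z} from hz),
        smoothLevel_eq_zero hδ (not_lt.1 hz), zero_mul]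

end LevelSetIntegrals

section LevelSetComparison

open scoped Laplacian

variable {g : ℂ → ℂ} {W : ℂ → ℝ} {a b δ : ℝ}

lemma mul_setIntegral_smoothLevel_add_le (hW : ContDiff ℝ 2 W) (hK : IsCompact {z | 0 ≤ W z})
    (hg : Differentiable ℂ g) (hδ : 0 < δ) {t : ℝ} (ht : 0 ≤ t) :
    4 * Real.pi * ∫ z in {z | 0 ≤ W z}, smoothLevel W δ (t + δ) z * ‖deriv g z‖ ^ 2
      ≤ (∫ z in {z | 0 ≤ W z}, smoothLevel W δ t z * -Δ W z)
        * ∫ z in {z | 0 ≤ W z}, smoothLevelDensity W δ t z * ‖deriv g z‖ ^ 2 := by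
  have hg' : Continuous (deriv g) := (hg.contDiff (n := 1)).continuous_deriv le_rfl
  have hlevel := continuous_smoothLevel hW.continuous δ
  have hlt {z : ℂ} (hz : z ∉ {z | 0 ≤ W z}) : W z < t := (not_le.1 hz).trans_le ht
  have hlevel0 {z : ℂ} (hz : z ∉ {z | 0 ≤ W z}) : smoothLevel W δ t z = 0 :=
    smoothLevel_eq_zero hδ (hlt hz).le
  have hiso := integral_smoothLevel_sq_mul_le hW hK hg hδ ht
  rw [← setIntegral_eq_integral_of_forall_compl_eq_zero (s := {z | 0 ≤ W z})
      (f := fun z => smoothLevel W δ t z ^ 2 * ‖deriv g z‖ ^ 2)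
      fun z hz => by rw [hlevel0 hz, zero_pow two_ne_zero, zero_mul],
    ← setIntegral_eq_integral_of_forall_compl_eq_zero (s := {z | 0 ≤ W z})
      (f := fun z => smoothLevel W δ t z * -Δ W z) fun z hz => by rw [hlevel0 hz, zero_mul],
    ← setIntegral_eq_integral_of_forall_compl_eq_zero (s := {z | 0 ≤ W z})
      (f := fun z => smoothLevelDensity W δ t z * ‖deriv g z‖ ^ 2) fun z hz => by
        rw [smoothLevelDensity_eq_zero hδ fun h => (hlt hz).not_ge h.1, zero_mul]] at hiso
  refine le_trans (mul_le_mul_of_nonneg_left ?_ (by positivity)) hiso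
  exact setIntegral_mono (((hlevel _).mul (hg'.norm.pow 2)).continuousOn.integrableOn_compact hK)
    ((((hlevel _).pow 2).mul (hg'.norm.pow 2)).continuousOn.integrableOn_compact hK)
    fun z => mul_le_mul_of_nonneg_right (smoothLevel_add_le_sq hδ) (sq_nonneg _)

lemma massProfile_setIntegral_smoothLevel_le (hW : ContDiff ℝ 2 W)
    (hK : IsCompact {z | 0 ≤ W z}) (hg : Differentiable ℂ g) (ha : 0 < a) (hb : 0 < b)
    (hlow : ∀ z, 0 ≤ W z → a * (Real.exp (W z) * ‖deriv g z‖ ^ 2) ≤ -Δ W z)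
    (hupp : ∀ z, 0 ≤ W z → -Δ W z ≤ b * (Real.exp (W z) * ‖deriv g z‖ ^ 2))
    {T : ℝ} (hT0 : 0 ≤ T) (hT : ∀ z, W z ≤ T) (hδ : 0 < δ) :
    massProfile a b (∫ z in {z | 0 ≤ W z}, smoothLevel W δ 0 z * -Δ W z)
      ≤ (1 + Real.exp T * (δ + (Real.exp δ - 1))) * ∫ z in {z | 0 < W z}, ‖deriv g z‖ ^ 2 := by
  have hg' : Continuous fun z => ‖deriv g z‖ ^ 2 :=
    ((hg.contDiff (n := 1)).continuous_deriv le_rfl).norm.pow 2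
  have hΔ : Continuous fun z => -Δ W z := (continuous_laplacian hW).neg
  have hWc := hW.continuous
  have hw0 : 0 ≤ fun z => ‖deriv g z‖ ^ 2 := fun z => by positivity
  have hlevel0 {t : ℝ} (ht : T ≤ t) z : smoothLevel W δ t z = 0 :=
    smoothLevel_eq_zero hδ ((hT z).trans ht)
  refine (massProfile_le_of_hasDerivAt (T := T)
    (f := fun t => ∫ z in {z | 0 ≤ W z}, smoothLevel W δ t z * -Δ W z) ha hb hδ.le hT0
    (hasDerivAt_setIntegral_smoothLevel_mul volume hWc hK hg' δ)
    (hasDerivAt_setIntegral_smoothLevel_mul volume hWc hK hΔ δ)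
    (fun t => setIntegral_nonneg hK.measurableSet fun z hz => mul_nonneg smoothLevel_nonneg
      (le_trans (by positivity) (hlow z hz)))
    (fun t => integral_nonneg fun z => mul_nonneg (smoothLevelDensity_nonneg hδ) (hw0 z))
    (fun t => mul_setIntegral_smoothLevel_add_le hW hK hg hδ)
    (mul_exp_mul_setIntegral_smoothLevelDensity_le hK hWc hg' hΔ hδ ha.le hw0 hlow)
    (setIntegral_smoothLevelDensity_le_mul_exp_mul hK hWc hg' hΔ hδ hb.le hw0 hupp)
    (fun t ht => by simp only [hlevel0 ht, zero_mul, integral_zero])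
    (by simp only [hlevel0 le_rfl, zero_mul, integral_zero])).trans ?_
  have hexp : 1 ≤ Real.exp δ := Real.one_le_exp hδ.le
  exact mul_le_mul_of_nonneg_left (setIntegral_smoothLevel_zero_mul_le hK hWc hg' hδ hw0)
    (by have := sub_nonneg.2 hexp; positivity)

theorem massProfile_setIntegral_neg_laplacian_le (hW : ContDiff ℝ 2 W)
    (hK : IsCompact {z | 0 ≤ W z}) (hg : Differentiable ℂ g) (ha : 0 < a) (hb : 0 < b)
    (hlow : ∀ z, 0 ≤ W z → a * (Real.exp (W z) * ‖deriv g z‖ ^ 2) ≤ -Δ W z)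
    (hupp : ∀ z, 0 ≤ W z → -Δ W z ≤ b * (Real.exp (W z) * ‖deriv g z‖ ^ 2)) :
    massProfile a b (∫ z in {z | 0 < W z}, -Δ W z) ≤ ∫ z in {z | 0 < W z}, ‖deriv g z‖ ^ 2 := by
  obtain ⟨T, hT0, hT⟩ : ∃ T : ℝ, 0 ≤ T ∧ ∀ z, W z ≤ T := by
    obtain ⟨C, hC⟩ := hK.exists_bound_of_continuousOn hW.continuous.continuousOn
    refine ⟨max C 0, le_max_right _ _, fun z => ?_⟩
    rcases le_total 0 (W z) with hz | hz
    · exact ((le_abs_self _).trans (hC z hz)).trans (le_max_left _ _)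
    · exact hz.trans (le_max_right _ _)
  have hprofile := ((continuous_massProfile a b).tendsto _).comp
    (tendsto_setIntegral_smoothLevel_mul (μ := volume) hK hW.continuous
      (continuous_laplacian hW).neg)
  have herror : Tendsto (fun δ => (1 + Real.exp T * (δ + (Real.exp δ - 1)))
      * ∫ z in {z | 0 < W z}, ‖deriv g z‖ ^ 2) (nhdsWithin 0 (Set.Ioi 0))
      (nhds ((1 + Real.exp T * (0 + (Real.exp 0 - 1))) * ∫ z in {z | 0 < W z}, ‖deriv g z‖ ^ 2)) :=
    (Continuous.tendsto (by fun_prop) 0).mono_left nhdsWithin_le_nhds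
  rw [Real.exp_zero, sub_self, add_zero, mul_zero, add_zero, one_mul] at herror
  refine le_of_tendsto_of_tendsto hprofile herror ?_
  filter_upwards [self_mem_nhdsWithin] with δ hδ
  exact massProfile_setIntegral_smoothLevel_le hW hK hg ha hb hlow hupp hT0 hT hδ

end LevelSetComparison

section CircleAverage

open scoped Laplacian Interval

lemma le_of_hasDerivAt_nonneg {f f' : ℝ → ℝ} {s t : ℝ} (hst : s ≤ t)
    (hf : ContinuousOn f (Set.Icc s t)) (hd : ∀ x ∈ Set.Ioo s t, HasDerivAt f (f' x) x)
    (hf' : ∀ x ∈ Set.Ioo s t, 0 ≤ f' x) : f s ≤ f t := by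
  rw [← interior_Icc] at hd hf'
  refine monotoneOn_of_deriv_nonneg (convex_Icc s t) hf
    (fun x hx => (hd x hx).differentiableAt.differentiableWithinAt) (fun x hx => ?_)
    (Set.left_mem_Icc.2 hst) (Set.right_mem_Icc.2 hst) hst
  rw [(hd x hx).deriv]
  exact hf' x hx

lemma hasDerivAt_circleMap_radius (c : ℂ) (r θ : ℝ) :
    HasDerivAt (fun r => circleMap c r θ) (circleMap 0 1 θ) r := by
  simpa [circleMap] using
    ((Complex.ofRealCLM.hasDerivAt (x := r)).mul_const (Complex.exp (θ * Complex.I))).const_add c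

lemma hasDerivAt_integral_of_continuous {E : Type*} [NormedAddCommGroup E] [NormedSpace ℝ E]
    {F F' : ℝ → ℝ → E} (hF : Continuous (Function.uncurry F))
    (hF' : Continuous (Function.uncurry F'))
    (hd : ∀ r θ, HasDerivAt (fun r => F r θ) (F' r θ) r) (u v r : ℝ) :
    HasDerivAt (fun r => ∫ θ in u..v, F r θ) (∫ θ in u..v, F' r θ) r := by
  have hslice s : Continuous (F s) := hF.comp (Continuous.prodMk_right s)
  have hslice' s : Continuous (F' s) := hF'.comp (Continuous.prodMk_right s)
  obtain ⟨C, hC⟩ := ((isCompact_Icc (a := r - 1) (b := r + 1)).prod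
    (isCompact_uIcc (a := u) (b := v))).exists_bound_of_continuousOn hF'.continuousOn
  refine (intervalIntegral.hasDerivAt_integral_of_dominated_loc_of_deriv_le
    (bound := fun _ => C) (s := Set.Icc (r - 1) (r + 1)) (Icc_mem_nhds (by linarith) (by linarith))
    (Eventually.of_forall fun s => (hslice s).aestronglyMeasurable)
    ((hslice r).intervalIntegrable _ _) (hslice' r).aestronglyMeasurable
    (Eventually.of_forall fun θ hθ s hs => ?_) (continuous_const.intervalIntegrable _ _)
    (Eventually.of_forall fun θ _ s _ => hd s θ)).2
  exact hC (s, θ) ⟨hs, Set.uIoc_subset_uIcc hθ⟩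

lemma fderiv_fderiv_add_fderiv_fderiv_mul_I (U : ℂ → ℝ) (z v : ℂ) :
    fderiv ℝ (fderiv ℝ U) z v v + fderiv ℝ (fderiv ℝ U) z (v * Complex.I) (v * Complex.I)
      = ‖v‖ ^ 2 * Δ U z := by
  have hv : v = v.re • (1 : ℂ) + v.im • Complex.I := by simp
  have hvI : v * Complex.I = v.re • Complex.I - v.im • (1 : ℂ) := by
    apply Complex.ext <;> simp
  rw [InnerProductSpace.laplacian_eq_iteratedFDeriv_complexPlane, Complex.sq_norm,
    Complex.normSq_apply, hvI]
  nth_rewrite 1 2 [hv]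
  simp only [iteratedFDeriv_two_apply, map_add, map_sub, map_smul, add_apply, sub_apply, smul_apply,
    smul_eq_mul, Matrix.cons_val_zero, Matrix.cons_val_one]
  ring

/-- The outward flux of `-∇U` through the circle of radius `r` centred at the origin. -/
noncomputable def flux (U : ℂ → ℝ) (r : ℝ) : ℝ :=
  -(r * ∫ θ in 0..2 * Real.pi, fderiv ℝ U (circleMap 0 r θ) (circleMap 0 1 θ))

variable {U v : ℂ → ℝ} {r : ℝ}

lemma continuous_uncurry_circleMap (c : ℂ) : Continuous fun p : ℝ × ℝ => circleMap c p.1 p.2 := by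
  unfold circleMap
  fun_prop

lemma hasDerivAt_circleAverage (hU : ContDiff ℝ 1 U) (hr : r ≠ 0) :
    HasDerivAt (fun r => Real.circleAverage U 0 r) (-(flux U r) / (2 * Real.pi * r)) r := by
  have hmap := continuous_uncurry_circleMap 0
  have hU' := hU.continuous_fderiv one_ne_zero
  have hd := hasDerivAt_integral_of_continuous (F := fun r θ => U (circleMap 0 r θ))
    (F' := fun r θ => fderiv ℝ U (circleMap 0 r θ) (circleMap 0 1 θ))
    (hU.continuous.comp hmap)
    ((hU'.comp hmap).clm_apply ((continuous_circleMap 0 1).comp continuous_snd))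
    (fun r θ => (hU.differentiable one_ne_zero _).hasFDerivAt.comp_hasDerivAt r
      (hasDerivAt_circleMap_radius 0 r θ)) 0 (2 * Real.pi) r
  refine (hd.const_mul (2 * Real.pi)⁻¹).congr_deriv ?_
  rw [flux]
  field

-- The integral over a period of the angular derivative of `DU(re^{iθ})(ie^{iθ})` vanishes.
lemma integral_fderiv_circleMap (hU : ContDiff ℝ 2 U) (r : ℝ) :
    ∫ θ in 0..2 * Real.pi, fderiv ℝ U (circleMap 0 r θ) (circleMap 0 1 θ)
      = r * ∫ θ in 0..2 * Real.pi, fderiv ℝ (fderiv ℝ U) (circleMap 0 r θ)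
          (circleMap 0 1 θ * Complex.I) (circleMap 0 1 θ * Complex.I) := by
  have hU1 : ContDiff ℝ 1 (fderiv ℝ U) := hU.fderiv_right (by norm_num)
  have hU' := hU1.continuous
  have _ : Continuous (fderiv ℝ (fderiv ℝ U)) := hU1.continuous_fderiv one_ne_zero
  have hd θ : HasDerivAt (fun θ => fderiv ℝ U (circleMap 0 r θ) (circleMap 0 1 θ * Complex.I))
      (r * fderiv ℝ (fderiv ℝ U) (circleMap 0 r θ) (circleMap 0 1 θ * Complex.I)
          (circleMap 0 1 θ * Complex.I)
        - fderiv ℝ U (circleMap 0 r θ) (circleMap 0 1 θ)) θ := by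
    have hsmul : circleMap 0 r θ * Complex.I = r • (circleMap 0 1 θ * Complex.I) := by
      simp [circleMap, mul_assoc]
    refine (((hU1.differentiable one_ne_zero _).hasFDerivAt.comp_hasDerivAt θ
      (hasDerivAt_circleMap 0 r θ)).clm_apply
        ((hasDerivAt_circleMap 0 1 θ).mul_const Complex.I)).congr_deriv ?_
    rw [hsmul, map_smul, mul_assoc, Complex.I_mul_I, mul_neg_one, map_neg, smul_apply, smul_eq_mul,
      Function.comp_apply, sub_eq_add_neg]
  have hperiod := intervalIntegral.integral_eq_sub_of_hasDerivAt (a := 0) (b := 2 * Real.pi)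
    (fun θ _ => hd θ) (by apply Continuous.intervalIntegrable; fun_prop)
  have hclosed (s : ℝ) : circleMap 0 s (2 * Real.pi) = circleMap 0 s 0 := by simp [circleMap]
  rw [intervalIntegral.integral_sub (by apply Continuous.intervalIntegrable; fun_prop)
    (by apply Continuous.intervalIntegrable; fun_prop), intervalIntegral.integral_const_mul,
    hclosed, hclosed, sub_self] at hperiod
  exact (sub_eq_zero.1 hperiod).symm

lemma hasDerivAt_flux (hU : ContDiff ℝ 2 U) (r : ℝ) :
    HasDerivAt (flux U) (2 * Real.pi * r * Real.circleAverage (fun z => -Δ U z) 0 r) r := by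
  have hmap := continuous_uncurry_circleMap 0
  have hU1 : ContDiff ℝ 1 (fderiv ℝ U) := hU.fderiv_right (by norm_num)
  have hU' := hU1.continuous
  have hU'' := hU1.continuous_fderiv one_ne_zero
  have he : Continuous fun p : ℝ × ℝ => circleMap 0 1 p.2 := by fun_prop
  have hradial := hasDerivAt_integral_of_continuous
    (F := fun r θ => fderiv ℝ U (circleMap 0 r θ) (circleMap 0 1 θ))
    (F' := fun r θ => fderiv ℝ (fderiv ℝ U) (circleMap 0 r θ) (circleMap 0 1 θ) (circleMap 0 1 θ))
    ((hU'.comp hmap).clm_apply he) (((hU''.comp hmap).clm_apply he).clm_apply he)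
    (fun r θ => (((hU1.differentiable one_ne_zero _).hasFDerivAt.comp_hasDerivAt r
      (hasDerivAt_circleMap_radius 0 r θ)).clm_apply (hasDerivAt_const r _)).congr_deriv
        (by simp)) 0 (2 * Real.pi) r
  refine ((hasDerivAt_id r).mul hradial).neg.congr_deriv ?_
  have hlaplacian θ : Δ U (circleMap 0 r θ)
      = fderiv ℝ (fderiv ℝ U) (circleMap 0 r θ) (circleMap 0 1 θ) (circleMap 0 1 θ)
        + fderiv ℝ (fderiv ℝ U) (circleMap 0 r θ) (circleMap 0 1 θ * Complex.I)
          (circleMap 0 1 θ * Complex.I) := by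
    rw [fderiv_fderiv_add_fderiv_fderiv_mul_I, norm_circleMap_zero, abs_one, one_pow, one_mul]
  simp only [Real.circleAverage_def, hlaplacian, id_eq, one_mul, smul_eq_mul]
  rw [integral_fderiv_circleMap hU, intervalIntegral.integral_neg, intervalIntegral.integral_add
    (by apply Continuous.intervalIntegrable; fun_prop)
    (by apply Continuous.intervalIntegrable; fun_prop)]
  field

lemma flux_zero (U : ℂ → ℝ) : flux U 0 = 0 := by
  rw [flux, zero_mul, neg_zero]

lemma setIntegral_ball_eq_integral_circleAverage (hv : Continuous v) (hr : 0 ≤ r) :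
    ∫ z in ball 0 r, v z = ∫ s in 0..r, 2 * Real.pi * s * Real.circleAverage v 0 s := by
  have hpolar (p : ℝ × ℝ) : Complex.polarCoord.symm p = circleMap 0 p.1 p.2 := by
    rw [Complex.polarCoord_symm_apply, circleMap_zero, Complex.exp_mul_I]
    push_cast
    ring
  have hindicator : Set.EqOn (fun p : ℝ × ℝ => p.1 • (ball 0 r).indicator v (circleMap 0 p.1 p.2))
      ((Set.Iio r ×ˢ (Set.univ : Set ℝ)).indicator fun p => p.1 * v (circleMap 0 p.1 p.2))
      (Set.Ioi 0 ×ˢ Set.Ioo (-Real.pi) Real.pi) := by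
    rintro ⟨s, θ⟩ ⟨hs : 0 < s, -⟩
    have hmem : circleMap 0 s θ ∈ ball 0 r ↔ (s, θ) ∈ Set.Iio r ×ˢ (Set.univ : Set ℝ) := by
      simp [abs_of_pos hs]
    simp only [smul_eq_mul, Set.indicator, hmem, mul_ite, mul_zero]
  have haverage s : 2 * Real.pi * s * Real.circleAverage v 0 s
      = ∫ θ in Set.Ioo (-Real.pi) Real.pi, s * v (circleMap 0 s θ) := by
    have hperiod := ((periodic_circleMap 0 s).comp v).intervalIntegral_add_eq 0 (-Real.pi)
    rw [zero_add, show -Real.pi + 2 * Real.pi = Real.pi by ring] at hperiod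
    simp only [Function.comp_apply] at hperiod
    rw [integral_const_mul, ← integral_Ioc_eq_integral_Ioo, ← intervalIntegral.integral_of_le
      (by linarith [Real.pi_pos]), Real.circleAverage_def, hperiod, smul_eq_mul]
    field
  have hint : IntegrableOn (fun p : ℝ × ℝ => p.1 * v (circleMap 0 p.1 p.2))
      (Set.Ioo 0 r ×ˢ Set.Ioo (-Real.pi) Real.pi) :=
    (ContinuousOn.integrableOn_compact (isCompact_Icc.prod isCompact_Icc)
      (by fun_prop)).mono_set (Set.prod_mono Set.Ioo_subset_Icc_self Set.Ioo_subset_Icc_self)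
  rw [← integral_indicator measurableSet_ball, ← Complex.integral_comp_polarCoord_symm,
    polarCoord_target]
  simp only [hpolar, haverage]
  rw [setIntegral_congr_fun (measurableSet_Ioi.prod measurableSet_Ioo) hindicator,
    setIntegral_indicator (measurableSet_Iio.prod MeasurableSet.univ), Set.prod_inter_prod,
    Set.inter_univ, Set.Ioi_inter_Iio, Measure.volume_eq_prod, setIntegral_prod _ hint,
    intervalIntegral.integral_of_le hr, integral_Ioc_eq_integral_Ioo]

lemma flux_eq_setIntegral_ball (hU : ContDiff ℝ 2 U) (hr : 0 ≤ r) :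
    flux U r = ∫ z in ball 0 r, -Δ U z := by
  have hcont : Continuous fun z => -Δ U z := (continuous_laplacian hU).neg
  have hcont' : Continuous fun s => 2 * Real.pi * s * Real.circleAverage (fun z => -Δ U z) 0 s := by
    fun_prop
  rw [setIntegral_ball_eq_integral_circleAverage hcont hr,
    intervalIntegral.integral_eq_sub_of_hasDerivAt (fun s _ => hasDerivAt_flux hU s)
      (hcont'.intervalIntegrable _ _), flux_zero, sub_zero]

lemma setIntegral_ball_le_mul_circleAverage (hv : ContDiff ℝ 2 v) (hΔ : 0 ≤ Δ v) (hr : 0 ≤ r) :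
    ∫ z in ball 0 r, v z ≤ Real.pi * r ^ 2 * Real.circleAverage v 0 r := by
  have hcont := hv.continuous
  have hmono s (hs : s ∈ Set.Icc 0 r) : Real.circleAverage v 0 s ≤ Real.circleAverage v 0 r := by
    refine le_of_hasDerivAt_nonneg hs.2 (by fun_prop) (fun t ht =>
      hasDerivAt_circleAverage (hv.of_le one_le_two) (hs.1.trans_lt ht.1).ne') fun t ht => ?_
    have ht0 : 0 < t := hs.1.trans_lt ht.1
    have hflux : flux v t ≤ 0 := by
      rw [flux_eq_setIntegral_ball hv ht0.le]
      exact integral_nonpos fun z => neg_nonpos.2 (hΔ z)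
    exact div_nonneg (neg_nonneg.2 hflux) (by positivity)
  have hpolar : Continuous fun s => 2 * Real.pi * s * Real.circleAverage v 0 s := by fun_prop
  calc ∫ z in ball 0 r, v z = ∫ s in 0..r, 2 * Real.pi * s * Real.circleAverage v 0 s :=
        setIntegral_ball_eq_integral_circleAverage hcont hr
    _ ≤ ∫ s in 0..r, 2 * Real.pi * s * Real.circleAverage v 0 r :=
        intervalIntegral.integral_mono_on hr (hpolar.intervalIntegrable _ _)
          (by apply Continuous.intervalIntegrable; fun_prop) fun s hs =>
            mul_le_mul_of_nonneg_left (hmono s hs) (mul_nonneg Real.two_pi_pos.le hs.1)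
    _ = Real.pi * r ^ 2 * Real.circleAverage v 0 r := by
        rw [intervalIntegral.integral_mul_const, intervalIntegral.integral_const_mul, integral_id]
        ring

end CircleAverage

section Laplacian

open scoped Laplacian

variable {E : Type*} [NormedAddCommGroup E] [InnerProductSpace ℝ E]

lemma fderiv_fderiv_apply {F : Type*} [NormedAddCommGroup F] [NormedSpace ℝ F] {f : E → F}
    {x : E} (hf : ContDiffAt ℝ 2 f x) (v w : E) :
    fderiv ℝ (fderiv ℝ f) x v w = fderiv ℝ (fun y => fderiv ℝ f y w) x v := by
  have hf' : DifferentiableAt ℝ (fderiv ℝ f) x :=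
    (hf.fderiv_right (m := 1) (by norm_num)).differentiableAt one_ne_zero
  rw [fderiv_clm_apply hf' (differentiableAt_const w)]
  simp

lemma laplacian_norm_sq [FiniteDimensional ℝ E] {F : Type*} [NormedAddCommGroup F]
    [InnerProductSpace ℝ F] {f : E → F} (hf : ContDiff ℝ 2 f) {ι : Type*} [Fintype ι]
    (b : OrthonormalBasis ι ℝ E) (x : E) :
    Δ (fun y => ‖f y‖ ^ 2) x
      = 2 * (∑ i, ‖fderiv ℝ f x (b i)‖ ^ 2 + inner ℝ (f x) (Δ f x)) := by
  have hd := hf.differentiable two_ne_zero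
  have hd' v : DifferentiableAt ℝ (fun y => fderiv ℝ f y v) x :=
    ((hf.fderiv_right (m := 1) (by norm_num)).differentiable one_ne_zero x).clm_apply
      (differentiableAt_const v)
  have hfirst v : (fun y => fderiv ℝ (fun y => ‖f y‖ ^ 2) y v)
      = fun y => 2 * inner ℝ (f y) (fderiv ℝ f y v) := by
    funext y
    rw [(hd y).hasFDerivAt.norm_sq.fderiv]
    simp
  have hsecond v : fderiv ℝ (fderiv ℝ fun y => ‖f y‖ ^ 2) x v v
      = 2 * (‖fderiv ℝ f x v‖ ^ 2 + inner ℝ (f x) (fderiv ℝ (fderiv ℝ f) x v v)) := by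
    rw [fderiv_fderiv_apply (hf.norm_sq ℝ).contDiffAt, hfirst,
      fderiv_const_mul ((hd x).inner ℝ (hd' v)), smul_apply, fderiv_inner_apply ℝ (hd x) (hd' v),
      ← fderiv_fderiv_apply hf.contDiffAt, real_inner_self_eq_norm_sq, smul_eq_mul, add_comm]
  simp only [InnerProductSpace.laplacian_eq_iteratedFDeriv_orthonormalBasis _ b,
    iteratedFDeriv_two_apply, Matrix.cons_val_zero, Matrix.cons_val_one, hsecond, inner_sum,
    Finset.sum_add_distrib, ← Finset.mul_sum]

lemma deriv_deriv_nonneg_of_isLocalMin {φ : ℝ → ℝ} {t : ℝ} (h : IsLocalMin φ t)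
    (hφ : ContinuousAt φ t) : 0 ≤ deriv (deriv φ) t := by
  by_contra! hneg
  have hmax := isLocalMax_of_deriv_deriv_neg hneg h.deriv_eq_zero hφ
  have hconst : φ =ᶠ[nhds t] fun _ => φ t := by
    filter_upwards [h, hmax] with s hmin hmax using le_antisymm hmax hmin
  rw [hconst.deriv.deriv_eq] at hneg
  simp at hneg

lemma fderiv_fderiv_nonneg_of_isLocalMin {f : E → ℝ} {x : E} (hf : ContDiff ℝ 2 f)
    (h : IsLocalMin f x) (v : E) : 0 ≤ fderiv ℝ (fderiv ℝ f) x v v := by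
  have hline (t : ℝ) : HasDerivAt (fun t : ℝ => x + t • v) v t := by
    simpa using ((hasDerivAt_id t).smul_const v).const_add x
  have hf' : ContDiff ℝ 1 fun y => fderiv ℝ f y v :=
    (hf.fderiv_right (m := 1) (by norm_num)).clm_apply contDiff_const
  have hderiv : deriv (fun t : ℝ => f (x + t • v)) = fun t => fderiv ℝ f (x + t • v) v :=
    funext fun t =>
      ((hf.differentiable two_ne_zero _).hasFDerivAt.comp_hasDerivAt t (hline t)).deriv
  have hderiv' : deriv (fun t : ℝ => fderiv ℝ f (x + t • v) v) 0
      = fderiv ℝ (fderiv ℝ f) x v v := by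
    rw [fderiv_fderiv_apply hf.contDiffAt]
    simpa [Function.comp_def] using
      ((hf'.differentiable one_ne_zero _).hasFDerivAt.comp_hasDerivAt (0 : ℝ) (hline 0)).deriv
  have hmin : IsLocalMin (fun t : ℝ => f (x + t • v)) 0 := by
    have ht : Tendsto (fun t : ℝ => x + t • v) (nhds 0) (nhds x) := by
      simpa using (hline 0).continuousAt.tendsto
    simpa [IsLocalMin, IsMinFilter] using ht.eventually h
  have hcont : Continuous fun t : ℝ => f (x + t • v) := hf.continuous.comp (by fun_prop)
  simpa only [hderiv, hderiv'] using
    deriv_deriv_nonneg_of_isLocalMin hmin hcont.continuousAt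

variable [FiniteDimensional ℝ E]

lemma laplacian_nonneg_of_isLocalMin {f : E → ℝ} {x : E} (hf : ContDiff ℝ 2 f)
    (h : IsLocalMin f x) : 0 ≤ Δ f x := by
  rw [InnerProductSpace.laplacian_eq_iteratedFDeriv_stdOrthonormalBasis]
  exact Finset.sum_nonneg fun i _ => by
    rw [iteratedFDeriv_two_apply]
    exact fderiv_fderiv_nonneg_of_isLocalMin hf h _

lemma le_of_forall_frontier_le_of_laplacian_neg {f : E → ℝ} {K : Set E} {m : ℝ}
    (hf : ContDiff ℝ 2 f) (hK : IsCompact K) (hΔ : ∀ x ∈ interior K, Δ f x < 0)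
    (hm : ∀ x ∈ frontier K, m ≤ f x) : ∀ x ∈ K, m ≤ f x := by
  intro x hx
  obtain ⟨y, hy, hmin⟩ := hK.exists_isMinOn ⟨x, hx⟩ hf.continuous.continuousOn
  refine (hm y ⟨subset_closure hy, fun hyint => ?_⟩).trans (hmin hx)
  exact (laplacian_nonneg_of_isLocalMin hf (hmin.isLocalMin (mem_interior_iff_mem_nhds.1 hyint))
    ).not_gt (hΔ y hyint)

end Laplacian

section HarmonicApproximation

lemma fourier_coe_eq_circleMap_pow (n : ℕ) (θ : ℝ) :
    (fourier n : C(AddCircle (2 * Real.pi), ℂ)) θ = circleMap 0 1 θ ^ n := by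
  rw [fourier_coe_apply, circleMap_zero, Complex.ofReal_one, one_mul, ← Complex.exp_nat_mul]
  congr 1
  push_cast
  field

lemma exists_differentiable_add_conj_eq {r : ℝ} (hr : r ≠ 0) {f : C(AddCircle (2 * Real.pi), ℂ)}
    (hf : f ∈ Submodule.span ℂ (Set.range (@fourier (2 * Real.pi)))) :
    ∃ P Q : ℂ → ℂ, Differentiable ℂ P ∧ Differentiable ℂ Q ∧
      ∀ θ : ℝ, f θ = P (circleMap 0 r θ) + starRingEnd ℂ (Q (circleMap 0 r θ)) := by
  have hdiv θ : circleMap 0 r θ / r = circleMap 0 1 θ := by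
    simp [circleMap, hr]
  induction hf using Submodule.span_induction with
  | mem f hf =>
    obtain ⟨n, rfl⟩ := hf
    obtain ⟨m, rfl | rfl⟩ := n.eq_nat_or_neg
    · refine ⟨fun z => (z / r) ^ m, 0, by fun_prop, by fun_prop, fun θ => ?_⟩
      simp only [fourier_coe_eq_circleMap_pow, hdiv, Pi.zero_apply, map_zero, add_zero]
    · refine ⟨0, fun z => (z / r) ^ m, by fun_prop, by fun_prop, fun θ => ?_⟩
      simp only [fourier_neg, fourier_coe_eq_circleMap_pow, hdiv, Pi.zero_apply, zero_add]
  | zero => exact ⟨0, 0, by fun_prop, by fun_prop, by simp⟩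
  | add f f' _ _ hf hf' =>
    obtain ⟨P, Q, hP, hQ, h⟩ := hf
    obtain ⟨P', Q', hP', hQ', h'⟩ := hf'
    refine ⟨fun z => P z + P' z, fun z => Q z + Q' z, by fun_prop, by fun_prop, fun θ => ?_⟩
    rw [ContinuousMap.add_apply, h, h', map_add]
    ring
  | smul c f _ hf =>
    obtain ⟨P, Q, hP, hQ, h⟩ := hf
    refine ⟨fun z => c * P z, fun z => starRingEnd ℂ c * Q z, by fun_prop, by fun_prop, fun θ => ?_⟩
    rw [ContinuousMap.smul_apply, h, map_mul, Complex.conj_conj, smul_eq_mul]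
    ring

lemma exists_differentiable_re_mem_Ioo {U : ℂ → ℝ} {r ε : ℝ} (hU : ContinuousOn U (sphere 0 r))
    (hr : 0 < r) (hε : 0 < ε) :
    ∃ P : ℂ → ℂ, Differentiable ℂ P ∧ ∀ z ∈ sphere 0 r, (P z).re ∈ Set.Ioo (U z) (U z + ε) := by
  have : Fact (0 < 2 * Real.pi) := ⟨Real.two_pi_pos⟩
  let G (θ : ℝ) : ℂ := (U (circleMap 0 r θ) + ε / 2 : ℝ)
  have hperiodic : Function.Periodic G (2 * Real.pi) := fun θ => by
    simp only [G, periodic_circleMap 0 r θ]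
  have hcont : Continuous G := Complex.continuous_ofReal.comp
    ((hU.comp_continuous (continuous_circleMap 0 r)
      (circleMap_mem_sphere 0 hr.le)).add continuous_const)
  let F : C(AddCircle (2 * Real.pi), ℂ) := ⟨hperiodic.lift, hcont.quotient_lift _⟩
  have hF : F ∈ (Submodule.span ℂ (Set.range (@fourier (2 * Real.pi)))).topologicalClosure :=
    span_fourier_closure_eq_top (T := 2 * Real.pi) ▸ Submodule.mem_top
  rw [← SetLike.mem_coe, Submodule.topologicalClosure_coe, Metric.mem_closure_iff] at hF
  obtain ⟨f, hf, hFf⟩ := hF (ε / 2) (half_pos hε)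
  obtain ⟨P, Q, hP, hQ, hPQ⟩ := exists_differentiable_add_conj_eq hr.ne' hf
  refine ⟨fun z => P z + Q z, hP.add hQ, fun z hz => ?_⟩
  obtain ⟨θ, rfl⟩ : z ∈ Set.range (circleMap 0 r) := by rwa [range_circleMap, abs_of_pos hr]
  have hdist : ‖G θ - f θ‖ < ε / 2 := by
    rw [← dist_eq_norm, ← hperiodic.lift_coe θ]
    exact (ContinuousMap.dist_apply_le_dist (f := F) (g := f) _).trans_lt hFf
  have hre := (Complex.abs_re_le_norm _).trans_lt hdist
  simp only [G, hPQ, Complex.sub_re, Complex.ofReal_re, Complex.add_re, Complex.conj_re,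
    abs_lt] at hre
  rw [Complex.add_re]
  constructor <;> linarith

end HarmonicApproximation

section Cutoff

open scoped Manifold ContDiff

variable {E : Type*} [NormedAddCommGroup E] [NormedSpace ℝ E] [FiniteDimensional ℝ E]
  {n : ℕ∞} {s Ω B : Set E}

lemma exists_contDiff_cutoff (n : ℕ∞) (hs : IsClosed s) (hΩ : IsOpen Ω) (hsΩ : s ⊆ Ω) :
    ∃ χ : E → ℝ, ContDiff ℝ n χ ∧ (∀ x ∉ Ω, χ =ᶠ[nhds x] 0) ∧ (∀ x ∈ s, χ =ᶠ[nhds x] 1) ∧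
      ∀ x, χ x ∈ Set.Icc 0 1 := by
  have : Disjoint Ωᶜ s := Set.disjoint_compl_left_iff_subset.2 hsΩ
  obtain ⟨χ, h0, h1, hχ⟩ :=
    exists_contMDiffMap_zero_one_nhds_of_isClosed 𝓘(ℝ, E) (n := n) hΩ.isClosed_compl hs this
  exact ⟨χ, χ.contMDiff.contDiff, fun x hx => eventually_nhdsSet_iff_forall.1 h0 x hx,
    fun x hx => eventually_nhdsSet_iff_forall.1 h1 x hx, hχ⟩

lemma exists_contDiff_eventuallyEq {u : E → ℝ} (hu : ContDiffOn ℝ n u Ω) (hs : IsClosed s)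
    (hΩ : IsOpen Ω) (hsΩ : s ⊆ Ω) :
    ∃ U : E → ℝ, ContDiff ℝ n U ∧ ∀ x ∈ s, U =ᶠ[nhds x] u := by
  obtain ⟨χ, hχ, h0, h1, -⟩ := exists_contDiff_cutoff n hs hΩ hsΩ
  refine ⟨fun x => χ x * u x, contDiff_iff_contDiffAt.2 fun x => ?_, fun x hx => ?_⟩
  · by_cases hx : x ∈ Ω
    · exact hχ.contDiffAt.mul (hu.contDiffAt (hΩ.mem_nhds hx))
    · refine (contDiffAt_const (c := (0 : ℝ))).congr_of_eventuallyEq ?_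
      filter_upwards [h0 x hx] with y hy
      rw [hy, Pi.zero_apply, zero_mul]
  · filter_upwards [h1 x hx] with y hy
    rw [hy, Pi.one_apply, one_mul]

lemma exists_contDiff_nonneg_iff {w : E → ℝ} (hw : ContDiff ℝ n w) (hB : IsOpen B)
    (hB' : Bornology.IsBounded B) (hneg : ∀ x ∈ frontier B, w x < 0) :
    ∃ W : E → ℝ, ContDiff ℝ n W ∧ IsCompact {x | 0 ≤ W x} ∧
      (∀ x, 0 ≤ W x ↔ x ∈ B ∧ 0 ≤ w x) ∧ ∀ x ∈ B, 0 ≤ w x → W =ᶠ[nhds x] w := by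
  have hclosure : B ∩ {x | 0 ≤ w x} = closure B ∩ {x | 0 ≤ w x} := by
    refine (Set.inter_subset_inter_left _ subset_closure).antisymm fun x ⟨hx, hwx⟩ => ⟨?_, hwx⟩
    by_contra hxB
    exact (hneg x ⟨hx, fun h => hxB (interior_subset h)⟩).not_ge hwx
  have hcompact : IsCompact (B ∩ {x | 0 ≤ w x}) :=
    hclosure ▸ hB'.isCompact_closure.inter_right (isClosed_le continuous_const hw.continuous)
  obtain ⟨χ, hχ, h0, h1, hmem⟩ :=
    exists_contDiff_cutoff n hcompact.isClosed hB Set.inter_subset_left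
  have hiff x : 0 ≤ χ x * w x - (1 - χ x) ↔ x ∈ B ∧ 0 ≤ w x := by
    refine ⟨fun h => ?_, fun h => by simpa [(h1 x h).self_of_nhds] using h.2⟩
    obtain ⟨hχ0, hχ1⟩ := hmem x
    refine ⟨by_contra fun hx => ?_, by_contra fun hx => ?_⟩
    · rw [(h0 x hx).self_of_nhds, Pi.zero_apply] at h
      linarith
    · have hprod : χ x * w x ≤ 0 := mul_nonpos_of_nonneg_of_nonpos hχ0 (not_le.1 hx).le
      rw [show χ x = 1 by linarith] at h
      linarith
  refine ⟨fun x => χ x * w x - (1 - χ x), (hχ.mul hw).sub (contDiff_const.sub hχ), ?_, hiff,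
    fun x hx hwx => ?_⟩
  · simp only [hiff]
    exact hcompact
  · filter_upwards [h1 x ⟨hx, hwx⟩] with y hy
    rw [hy, Pi.one_apply, one_mul, sub_self, sub_zero]

end Cutoff

lemma tendsto_setIntegral_inter_of_eventually_mem {α ι F : Type*} [MeasurableSpace α]
    {μ : Measure α} [NormedAddCommGroup F] [NormedSpace ℝ F] {l : Filter ι}
    [l.IsCountablyGenerated] {f : α → F} {s : Set α} {t : ι → Set α} (hs : MeasurableSet s)
    (hf : IntegrableOn f s μ) (ht : ∀ i, MeasurableSet (t i))
    (hst : ∀ x ∈ s, ∀ᶠ i in l, x ∈ t i) :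
    Tendsto (fun i => ∫ x in s ∩ t i, f x ∂μ) l (nhds (∫ x in s, f x ∂μ)) := by
  simp only [← setIntegral_indicator (ht _)]
  refine tendsto_integral_filter_of_dominated_convergence (fun x => ‖f x‖)
    (Eventually.of_forall fun i => (hf.indicator (ht i)).aestronglyMeasurable)
    (Eventually.of_forall fun i => Eventually.of_forall fun x => norm_indicator_le_norm_self _ _)
    hf.norm ((ae_restrict_iff' hs).2 (Eventually.of_forall fun x hx => ?_))
  refine tendsto_const_nhds.congr' ?_
  filter_upwards [hst x hx] with i hi using (Set.indicator_of_mem hi f).symm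

section DiscComparison

open scoped Laplacian

variable {U w : ℂ → ℝ} {P g : ℂ → ℂ} {a b c m r ε : ℝ}

lemma massProfile_setIntegral_inter_neg_laplacian_le {B : Set ℂ} (hw : ContDiff ℝ 2 w)
    (hB : IsOpen B) (hB' : Bornology.IsBounded B) (hneg : ∀ z ∈ frontier B, w z < 0)
    (hg : Differentiable ℂ g) (ha : 0 < a) (hb : 0 < b)
    (hlow : ∀ z ∈ B, a * (Real.exp (w z) * ‖deriv g z‖ ^ 2) ≤ -Δ w z)
    (hupp : ∀ z ∈ B, -Δ w z ≤ b * (Real.exp (w z) * ‖deriv g z‖ ^ 2)) :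
    massProfile a b (∫ z in B ∩ {z | 0 < w z}, -Δ w z)
      ≤ ∫ z in B ∩ {z | 0 < w z}, ‖deriv g z‖ ^ 2 := by
  obtain ⟨W, hW, hK, hiff, hgerm⟩ := exists_contDiff_nonneg_iff (n := 2) hw hB hB' hneg
  have hWw {z} (hz : 0 ≤ W z) : z ∈ B ∧ W z = w z ∧ Δ W z = Δ w z := by
    have h := hgerm z ((hiff z).1 hz).1 ((hiff z).1 hz).2
    exact ⟨((hiff z).1 hz).1, h.self_of_nhds,
      (InnerProductSpace.laplacian_congr_nhds h).self_of_nhds⟩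
  have hset : {z | 0 < W z} = B ∩ {z | 0 < w z} := by
    ext z
    refine ⟨fun (hz : 0 < W z) => ?_, fun ⟨hzB, (hz : 0 < w z)⟩ => ?_⟩
    · exact ⟨(hWw hz.le).1, hz.trans_eq (hWw hz.le).2.1⟩
    · exact hz.trans_eq (hgerm z hzB hz.le).self_of_nhds.symm
  have key := massProfile_setIntegral_neg_laplacian_le hW hK hg ha hb
    (fun z hz => by simpa only [(hWw hz).2] using hlow z (hWw hz).1)
    (fun z hz => by simpa only [(hWw hz).2] using hupp z (hWw hz).1)
  rw [← hset]
  convert key using 2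
  refine setIntegral_congr_fun (isOpen_lt continuous_const hW.continuous).measurableSet
    fun z (hz : 0 < W z) => ?_
  simp only [(hWw hz.le).2.2]

lemma exists_differentiable_norm_deriv_sq_eq_exp_re (hP : Differentiable ℂ P) :
    ∃ g : ℂ → ℂ, Differentiable ℂ g ∧ ∀ z, ‖deriv g z‖ ^ 2 = Real.exp (P z).re := by
  obtain ⟨g, hg⟩ := Differentiable.isExactOn_univ (f := fun z => Complex.exp (P z / 2))
    (by fun_prop)
  refine ⟨g, fun z => (hg z trivial).differentiableAt, fun z => ?_⟩
  rw [(hg z trivial).deriv, Complex.norm_exp, ← Real.exp_nat_mul, Complex.div_ofNat_re]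
  congr 1
  push_cast
  ring

lemma laplacian_sub_re (hU : ContDiff ℝ 2 U) (hP : Differentiable ℂ P) :
    Δ (fun z => U z - (P z).re) = Δ U := by
  funext z
  have hre := (hP.analyticAt z).harmonicAt_re
  have hsub := hU.contDiffAt.laplacian_sub hre.1
  rw [hre.2.self_of_nhds, Pi.zero_apply, sub_zero] at hsub
  exact hsub

lemma setIntegral_ball_norm_sq_le_mul_circleAverage (hg : Differentiable ℂ g) (hr : 0 ≤ r) :
    ∫ z in ball 0 r, ‖g z‖ ^ 2 ≤ Real.pi * r ^ 2 * Real.circleAverage (fun z => ‖g z‖ ^ 2) 0 r := by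
  have hg2 : ContDiff ℝ 2 g := hg.contDiff.restrict_scalars ℝ
  refine setIntegral_ball_le_mul_circleAverage (hg2.norm_sq ℝ) (fun z => ?_) hr
  rw [laplacian_norm_sq hg2 Complex.orthonormalBasisOneI,
    (hg.analyticAt z).harmonicAt.2.self_of_nhds]
  simp only [Pi.zero_apply, inner_zero_right, add_zero]
  positivity

lemma laplacian_add_mul_norm_sq (hw : ContDiff ℝ 2 w) (c : ℝ) (z : ℂ) :
    Δ (fun z : ℂ => w z + c * ‖z‖ ^ 2) z = Δ w z + 4 * c := by
  have hsq : ContDiff ℝ 2 fun z : ℂ => ‖z‖ ^ 2 := contDiff_norm_sq ℝ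
  have hΔsq : Δ (fun z : ℂ => ‖z‖ ^ 2) z = 4 := by
    have hid : Δ (id : ℂ → ℂ) z = 0 := analyticAt_id.harmonicAt.2.self_of_nhds
    refine (laplacian_norm_sq contDiff_id Complex.orthonormalBasisOneI z).trans ?_
    rw [hid]
    norm_num
  calc Δ (w + c • fun z : ℂ => ‖z‖ ^ 2) z
      = Δ w z + Δ (c • fun z : ℂ => ‖z‖ ^ 2) z :=
        hw.contDiffAt.laplacian_add (contDiff_const.smul hsq).contDiffAt
    _ = Δ w z + 4 * c := by
        rw [InnerProductSpace.laplacian_smul c hsq.contDiffAt, hΔsq, smul_eq_mul, mul_comm]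

lemma add_mul_sub_norm_sq_le_of_laplacian_lt (hw : ContDiff ℝ 2 w)
    (hΔ : ∀ z ∈ ball 0 r, c < -Δ w z) (hr : r ≠ 0) (hm : ∀ z ∈ sphere 0 r, m ≤ w z) :
    ∀ z ∈ closedBall 0 r, m + c / 4 * (r ^ 2 - ‖z‖ ^ 2) ≤ w z := by
  have hmin := le_of_forall_frontier_le_of_laplacian_neg (f := fun z => w z + c / 4 * ‖z‖ ^ 2)
    (m := m + c / 4 * r ^ 2) (hw.add (contDiff_const.mul (contDiff_norm_sq ℝ)))
    (isCompact_closedBall 0 r) (fun z hz => ?_) (fun z hz => ?_)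
  · intro z hz
    linarith [hmin z hz]
  · rw [interior_closedBall 0 hr] at hz
    rw [laplacian_add_mul_norm_sq hw]
    linarith [hΔ z hz]
  · rw [frontier_closedBall 0 hr] at hz
    simp only [mem_sphere_zero_iff_norm.1 hz]
    linarith [hm z hz]

lemma massProfile_setIntegral_inter_re_lt_le (hU : ContDiff ℝ 2 U) (hP : Differentiable ℂ P)
    (ha : 0 < a) (hb : 0 < b) (hr : 0 < r)
    (hlow : ∀ z ∈ ball 0 r, a * Real.exp (U z) ≤ -Δ U z)
    (hupp : ∀ z ∈ ball 0 r, -Δ U z ≤ b * Real.exp (U z))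
    (hPU : ∀ z ∈ sphere 0 r, (P z).re ∈ Set.Ioo (U z) (U z + ε)) :
    massProfile a b (∫ z in ball 0 r ∩ {z | 0 < U z - (P z).re}, -Δ U z)
      ≤ Real.exp ε * (Real.pi * r ^ 2 * Real.circleAverage (fun z => Real.exp (U z)) 0 r) := by
  have hP2 : ContDiff ℝ 2 fun z => (P z).re :=
    Complex.reCLM.contDiff.comp (hP.contDiff.restrict_scalars ℝ)
  obtain ⟨g, hg, hg'⟩ := exists_differentiable_norm_deriv_sq_eq_exp_re hP
  have hexp z : Real.exp (U z - (P z).re) * ‖deriv g z‖ ^ 2 = Real.exp (U z) := by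
    rw [hg', ← Real.exp_add, sub_add_cancel]
  have hcont : Continuous fun z => ‖deriv g z‖ ^ 2 :=
    (hg.contDiff.continuous_deriv le_rfl).norm.pow 2
  have hU' := hU.continuous
  calc massProfile a b (∫ z in ball 0 r ∩ {z | 0 < U z - (P z).re}, -Δ U z)
      ≤ ∫ z in ball 0 r ∩ {z | 0 < U z - (P z).re}, ‖deriv g z‖ ^ 2 := by
        have hle := massProfile_setIntegral_inter_neg_laplacian_le (hU.sub hP2) isOpen_ball
          (isBounded_ball (x := 0) (r := r))
          (fun z hz => sub_neg.2 (hPU z (frontier_ball_subset_sphere hz)).1) hg ha hb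
        simp only [laplacian_sub_re hU hP, hexp] at hle
        exact hle hlow hupp
    _ ≤ ∫ z in ball 0 r, ‖deriv g z‖ ^ 2 :=
        setIntegral_mono_set
          ((hcont.locallyIntegrable.integrableOn_isCompact (isCompact_closedBall 0 r)).mono_set
            ball_subset_closedBall)
          (Eventually.of_forall fun z => sq_nonneg _) Set.inter_subset_left.eventuallyLE
    _ ≤ Real.pi * r ^ 2 * Real.circleAverage (fun z => ‖deriv g z‖ ^ 2) 0 r :=
        setIntegral_ball_norm_sq_le_mul_circleAverage hg.deriv hr.le
    _ ≤ Real.pi * r ^ 2 * Real.circleAverage (fun z => Real.exp ε * Real.exp (U z)) 0 r := by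
        gcongr with z hz
        · exact hcont.continuousOn.circleIntegrable'
        · exact Continuous.continuousOn (by fun_prop) |>.circleIntegrable'
        · rw [hg', ← Real.exp_add, Real.exp_le_exp, add_comm]
          exact (hPU z (abs_of_pos hr ▸ hz)).2.le
    _ = Real.exp ε * (Real.pi * r ^ 2 * Real.circleAverage (fun z => Real.exp (U z)) 0 r) := by
        rw [← mul_left_comm, ← smul_eq_mul (Real.exp ε), ← Real.circleAverage_smul]
        rfl

theorem massProfile_flux_le (hU : ContDiff ℝ 2 U) (ha : 0 < a) (hb : 0 < b) (hr : 0 < r)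
    (hlow : ∀ z ∈ closedBall 0 r, a * Real.exp (U z) ≤ -Δ U z)
    (hupp : ∀ z ∈ closedBall 0 r, -Δ U z ≤ b * Real.exp (U z)) :
    massProfile a b (flux U r)
      ≤ Real.pi * r ^ 2 * Real.circleAverage (fun z => Real.exp (U z)) 0 r := by
  have hΔ : Continuous fun z => -Δ U z := (continuous_laplacian hU).neg
  obtain ⟨z₀, hz₀, hmin⟩ := (isCompact_closedBall (0 : ℂ) r).exists_isMinOn
    ⟨0, mem_closedBall_self hr.le⟩ hΔ.continuousOn
  obtain ⟨c, hc, hcΔ⟩ : ∃ c > 0, ∀ z ∈ closedBall 0 r, c < -Δ U z := by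
    have hpos : 0 < -Δ U z₀ := (by positivity : 0 < a * Real.exp (U z₀)).trans_le (hlow z₀ hz₀)
    exact ⟨_, half_pos hpos, fun z hz => (half_lt_self hpos).trans_le (hmin hz)⟩
  choose P hP hPU using fun n : ℕ => exists_differentiable_re_mem_Ioo hU.continuous.continuousOn hr
    (Nat.one_div_pos_of_nat (n := n))
  have hw n : ContDiff ℝ 2 fun z => U z - (P n z).re :=
    hU.sub (Complex.reCLM.contDiff.comp ((hP n).contDiff.restrict_scalars ℝ))
  have hbound (n : ℕ) := add_mul_sub_norm_sq_le_of_laplacian_lt (m := -(1 / (n + 1))) (hw n)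
    (fun z hz => by rw [laplacian_sub_re hU (hP n)]; exact hcΔ z (ball_subset_closedBall hz)) hr.ne'
    (fun z hz => by linarith only [(hPU n z hz).2])
  have hlim : Tendsto (fun n => ∫ z in ball 0 r ∩ {z | 0 < U z - (P n z).re}, -Δ U z) atTop
      (nhds (flux U r)) := by
    rw [flux_eq_setIntegral_ball hU hr.le]
    refine tendsto_setIntegral_inter_of_eventually_mem measurableSet_ball
      ((hΔ.locallyIntegrable.integrableOn_isCompact (isCompact_closedBall 0 r)).mono_set
        ball_subset_closedBall)
      (fun n => (isOpen_lt continuous_const (hw n).continuous).measurableSet) fun z hz => ?_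
    have hpos : 0 < c / 4 * (r ^ 2 - ‖z‖ ^ 2) := by
      have := sq_lt_sq' (by linarith [norm_nonneg z]) (mem_ball_zero_iff.1 hz)
      exact mul_pos (by linarith) (sub_pos.2 this)
    filter_upwards [tendsto_one_div_add_atTop_nhds_zero_nat.eventually_lt_const hpos] with n hn
    show 0 < U z - (P n z).re
    linarith [hbound n z (ball_subset_closedBall hz)]
  have hexp : Tendsto (fun n : ℕ => Real.exp (1 / (n + 1))
      * (Real.pi * r ^ 2 * Real.circleAverage (fun z => Real.exp (U z)) 0 r)) atTop
      (nhds (Real.pi * r ^ 2 * Real.circleAverage (fun z => Real.exp (U z)) 0 r)) := by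
    simpa using ((Real.continuous_exp.tendsto 0).comp
      (tendsto_one_div_add_atTop_nhds_zero_nat (𝕜 := ℝ))).mul_const
        (Real.pi * r ^ 2 * Real.circleAverage (fun z => Real.exp (U z)) 0 r)
  refine le_of_tendsto_of_tendsto' (((continuous_massProfile a b).tendsto _).comp hlim) hexp
    fun n => massProfile_setIntegral_inter_re_lt_le hU (hP n) ha hb hr
      (fun z hz => hlow z (ball_subset_closedBall hz))
      (fun z hz => hupp z (ball_subset_closedBall hz)) (hPU n)

end DiscComparison

section RadialInequality

open scoped Laplacian

variable {U : ℂ → ℝ} {a b k q r s t R : ℝ}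

lemma exists_mem_Icc_le_and_eq {M : ℝ → ℝ} {c : ℝ} (hM : ContinuousOn M (Set.Icc s t))
    (hst : s ≤ t) (hs : M s ≤ c) : ∃ r ∈ Set.Icc s t, M r ≤ c ∧ (r = t ∨ M r = c) := by
  rcases le_total (M t) c with ht | ht
  · exact ⟨t, Set.right_mem_Icc.2 hst, ht, Or.inl rfl⟩
  · obtain ⟨r, hr, hMr⟩ := intermediate_value_Icc hst hM ⟨hs, ht⟩
    exact ⟨r, hr, hMr.le, Or.inr hMr⟩

lemma le_two_mul_mul_massProfile {f : ℝ} (hb : 0 < b) (hf0 : 0 ≤ f) (hf : f ≤ 4 * Real.pi) :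
    f ≤ 2 * b * massProfile a b f := by
  have heq : 2 * b * massProfile a b f = f + f * (4 * Real.pi - f) / (4 * Real.pi) := by
    rw [massProfile, max_eq_left (by linarith), max_eq_right (by linarith)]
    field
  rw [heq]
  have := mul_nonneg hf0 (sub_nonneg.2 hf)
  exact le_add_of_nonneg_right (by positivity)

lemma mul_sub_le_two_mul_mul_massProfile {f : ℝ} (ha : 0 < a) (hq : q ^ 2 = a / b)
    (hf₁ : 4 * Real.pi ≤ f) (hf₂ : f ≤ 4 * Real.pi * (1 + q)) :
    q * (4 * Real.pi * (1 + q) - f) ≤ 2 * a * massProfile a b f := by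
  have heq : 2 * a * massProfile a b f = q * (4 * Real.pi * (1 + q) - f)
      + (f - 4 * Real.pi) * (4 * Real.pi * (1 + q) - f) / (4 * Real.pi) := by
    have hba : 2 * a * (2 * Real.pi / b) = 4 * Real.pi * q ^ 2 := by rw [hq]; ring
    rw [massProfile, max_eq_right (by linarith), max_eq_left (by linarith), mul_sub, hba]
    field
  rw [heq]
  have := mul_nonneg (sub_nonneg.2 hf₁) (sub_nonneg.2 hf₂)
  exact le_add_of_nonneg_right (by positivity)

lemma exp_circleAverage_le {f : ℂ → ℝ} {c : ℂ} (hf : CircleIntegrable f c r)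
    (hexp : CircleIntegrable (fun z => Real.exp (f z)) c r) :
    Real.exp (Real.circleAverage f c r) ≤ Real.circleAverage (fun z => Real.exp (f z)) c r := by
  set m := Real.circleAverage f c r with hm
  have hconst (x : ℝ) : CircleIntegrable (fun _ => x) c r := circleIntegrable_const x c r
  calc Real.exp m
      = Real.circleAverage (fun z => Real.exp m • (f z + (1 - m))) c r := by
        rw [Real.circleAverage_fun_smul, Real.circleAverage_fun_add hf (hconst _),
          Real.circleAverage_const, ← hm, smul_eq_mul]
        ring
    _ ≤ Real.circleAverage (fun z => Real.exp (f z)) c r := by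
        refine Real.circleAverage_mono ((hf.add (hconst _)).const_smul) hexp fun z _ => ?_
        have htangent := Real.add_one_le_exp (f z - m)
        rw [Real.exp_sub, le_div_iff₀ (Real.exp_pos m)] at htangent
        rw [smul_eq_mul]
        linarith

lemma mul_circleAverage_exp_le (hU : ContDiff ℝ 2 U) (hr : 0 ≤ r)
    (hlow : ∀ z ∈ closedBall 0 r, a * Real.exp (U z) ≤ -Δ U z) :
    a * Real.circleAverage (fun z => Real.exp (U z)) 0 r
      ≤ Real.circleAverage (fun z => -Δ U z) 0 r := by
  have hcont := hU.continuous
  have hΔ := continuous_laplacian hU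
  rw [← smul_eq_mul, ← Real.circleAverage_fun_smul]
  refine Real.circleAverage_mono (ContinuousOn.circleIntegrable' (by fun_prop))
    (ContinuousOn.circleIntegrable' (by fun_prop)) fun z hz => ?_
  rw [abs_of_nonneg hr] at hz
  exact hlow z (sphere_subset_closedBall hz)

lemma mul_exp_circleAverage_le (hU : ContDiff ℝ 2 U) (ha : 0 ≤ a) (hr : 0 ≤ r)
    (hlow : ∀ z ∈ closedBall 0 r, a * Real.exp (U z) ≤ -Δ U z) :
    a * Real.exp (Real.circleAverage U 0 r) ≤ Real.circleAverage (fun z => -Δ U z) 0 r := by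
  have hcont := hU.continuous
  calc a * Real.exp (Real.circleAverage U 0 r)
      ≤ a * Real.circleAverage (fun z => Real.exp (U z)) 0 r := by
        gcongr
        exact exp_circleAverage_le (ContinuousOn.circleIntegrable' (by fun_prop))
          (ContinuousOn.circleIntegrable' (by fun_prop))
    _ ≤ Real.circleAverage (fun z => -Δ U z) 0 r := mul_circleAverage_exp_le hU hr hlow

lemma mul_massProfile_flux_le (hU : ContDiff ℝ 2 U) (ha : 0 < a) (hb : 0 < b) (hr : 0 < r)
    (hlow : ∀ z ∈ closedBall 0 r, a * Real.exp (U z) ≤ -Δ U z)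
    (hupp : ∀ z ∈ closedBall 0 r, -Δ U z ≤ b * Real.exp (U z)) :
    a * massProfile a b (flux U r)
      ≤ Real.pi * r ^ 2 * Real.circleAverage (fun z => -Δ U z) 0 r := by
  have hdisc := massProfile_flux_le hU ha hb hr hlow hupp
  calc a * massProfile a b (flux U r)
      ≤ a * (Real.pi * r ^ 2 * Real.circleAverage (fun z => Real.exp (U z)) 0 r) := by gcongr
    _ = Real.pi * r ^ 2 * (a * Real.circleAverage (fun z => Real.exp (U z)) 0 r) := by ring
    _ ≤ Real.pi * r ^ 2 * Real.circleAverage (fun z => -Δ U z) 0 r := by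
        gcongr
        exact mul_circleAverage_exp_le hU hr.le hlow

lemma flux_le_flux (hU : ContDiff ℝ 2 U) (hΔ : ∀ z ∈ closedBall 0 t, 0 ≤ -Δ U z) (hs : 0 ≤ s)
    (hst : s ≤ t) : flux U s ≤ flux U t := by
  have hd x := hasDerivAt_flux hU x
  refine le_of_hasDerivAt_nonneg hst (fun x _ => (hd x).continuousAt.continuousWithinAt)
    (fun x _ => hd x) fun x hx => ?_
  have hx0 : 0 < x := hs.trans_lt hx.1
  refine mul_nonneg (by positivity) (Real.circleAverage_nonneg_of_nonneg fun z hz => hΔ z ?_)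
  rw [abs_of_pos hx0] at hz
  exact closedBall_subset_closedBall hx.2.le (sphere_subset_closedBall hz)

lemma flux_nonneg (hU : ContDiff ℝ 2 U) (hΔ : ∀ z ∈ closedBall 0 r, 0 ≤ -Δ U z) (hr : 0 ≤ r) :
    0 ≤ flux U r :=
  (flux_zero U).symm.le.trans (flux_le_flux hU hΔ le_rfl hr)

lemma circleAverage_le_circleAverage (hU : ContDiff ℝ 2 U)
    (hΔ : ∀ z ∈ closedBall 0 t, 0 ≤ -Δ U z) (hs : 0 ≤ s) (hst : s ≤ t) :
    Real.circleAverage U 0 t ≤ Real.circleAverage U 0 s := by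
  have hcont := hU.continuous
  refine neg_le_neg_iff.1 (le_of_hasDerivAt_nonneg (f := fun x => -Real.circleAverage U 0 x) hst
    (by fun_prop) (fun x hx =>
      (hasDerivAt_circleAverage (hU.of_le one_le_two) (hs.trans_lt hx.1).ne').fun_neg)
    fun x hx => ?_)
  have hx0 : 0 < x := hs.trans_lt hx.1
  have hflux := flux_nonneg hU (fun z hz => hΔ z (closedBall_subset_closedBall hx.2.le hz)) hx0.le
  rw [neg_div, neg_neg]
  positivity

lemma apply_zero_le_circleAverage_add (hU : ContDiff ℝ 2 U) (ha : 0 < a) (hb : 0 < b)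
    (hr : 0 ≤ r) (hlow : ∀ z ∈ closedBall 0 r, a * Real.exp (U z) ≤ -Δ U z)
    (hupp : ∀ z ∈ closedBall 0 r, -Δ U z ≤ b * Real.exp (U z)) (hflux : flux U r ≤ 4 * Real.pi) :
    U 0 ≤ Real.circleAverage U 0 r + 2 * b / a := by
  have hcont := hU.continuous
  have hcont' : Continuous (flux U) :=
    continuous_iff_continuousAt.2 fun x => (hasDerivAt_flux hU x).continuousAt
  have hΔ z (hz : z ∈ closedBall 0 r) : 0 ≤ -Δ U z := le_trans (by positivity) (hlow z hz)
  have hmono := le_of_hasDerivAt_nonneg (s := 0) (t := r)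
    (f := fun x => Real.circleAverage U 0 x + b / (2 * Real.pi * a) * flux U x) hr (by fun_prop)
    (fun x hx => (hasDerivAt_circleAverage (hU.of_le one_le_two) hx.1.ne').fun_add
      ((hasDerivAt_flux hU x).const_mul _)) fun x hx => ?_
  · rw [flux_zero, mul_zero, add_zero, Real.circleAverage_zero] at hmono
    calc U 0 ≤ Real.circleAverage U 0 r + b / (2 * Real.pi * a) * flux U r := hmono
      _ ≤ Real.circleAverage U 0 r + b / (2 * Real.pi * a) * (4 * Real.pi) := by gcongr
      _ = Real.circleAverage U 0 r + 2 * b / a := by field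
  · have hx0 : 0 < x := hx.1
    have hsub : closedBall (0 : ℂ) x ⊆ closedBall 0 r := closedBall_subset_closedBall hx.2.le
    have hflux' := le_two_mul_mul_massProfile (a := a) hb
      (flux_nonneg hU (fun z hz => hΔ z (hsub hz)) hx0.le)
      ((flux_le_flux hU hΔ hx0.le hx.2.le).trans hflux)
    have hprofile := mul_massProfile_flux_le hU ha hb hx0 (fun z hz => hlow z (hsub hz))
      fun z hz => hupp z (hsub hz)
    set m := Real.circleAverage (fun z => -Δ U z) 0 x
    have hle : flux U x * a ≤ 2 * b * (Real.pi * x ^ 2 * m) := by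
      calc flux U x * a ≤ 2 * b * massProfile a b (flux U x) * a := by gcongr
        _ = 2 * b * (a * massProfile a b (flux U x)) := by ring
        _ ≤ 2 * b * (Real.pi * x ^ 2 * m) := by gcongr
    have heq : -(flux U x) / (2 * Real.pi * x) + b / (2 * Real.pi * a) * (2 * Real.pi * x * m)
        = (2 * b * (Real.pi * x ^ 2 * m) - flux U x * a) / (2 * Real.pi * x * a) := by field
    rw [heq]
    exact div_nonneg (sub_nonneg.2 hle) (by positivity)

lemma circleAverage_add_two_mul_log_le (hU : ContDiff ℝ 2 U) (ha : 0 < a) (hr : 0 < r)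
    (hlow : ∀ z ∈ closedBall 0 r, a * Real.exp (U z) ≤ -Δ U z) (hflux : flux U r ≤ 4 * Real.pi) :
    Real.circleAverage U 0 r + 2 * Real.log r ≤ Real.log (4 / a) := by
  set E := Real.exp (Real.circleAverage U 0 r) with hE
  have hΔ z (hz : z ∈ closedBall 0 r) : 0 ≤ -Δ U z := le_trans (by positivity) (hlow z hz)
  have hd x : HasDerivAt (fun x => flux U x - Real.pi * a * E * x ^ 2)
      (2 * Real.pi * x * Real.circleAverage (fun z => -Δ U z) 0 x
        - Real.pi * a * E * (2 * x)) x := by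
    simpa using (hasDerivAt_flux hU x).fun_sub ((hasDerivAt_pow 2 x).const_mul (Real.pi * a * E))
  have hmono := le_of_hasDerivAt_nonneg hr.le
    (fun x _ => (hd x).continuousAt.continuousWithinAt) (fun x _ => hd x) fun x hx => ?_
  · have harea : E * r ^ 2 ≤ 4 / a := by
      rw [flux_zero, zero_pow two_ne_zero, mul_zero, sub_zero] at hmono
      rw [le_div_iff₀ ha]
      refine le_of_mul_le_mul_left ?_ Real.pi_pos
      linarith
    have hlog := Real.log_le_log (by positivity) harea
    rwa [Real.log_mul (by positivity) (by positivity), Real.log_exp, Real.log_pow,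
      Nat.cast_ofNat] at hlog
  · have hx0 : 0 < x := hx.1
    have hle : a * E ≤ Real.circleAverage (fun z => -Δ U z) 0 x := by
      refine le_trans ?_ (mul_exp_circleAverage_le hU ha.le hx0.le fun z hz =>
        hlow z (closedBall_subset_closedBall hx.2.le hz))
      rw [hE]
      gcongr
      exact circleAverage_le_circleAverage hU hΔ hx0.le hx.2.le
    have := mul_le_mul_of_nonneg_left hle (show 0 ≤ 2 * Real.pi * x by positivity)
    linarith

lemma hasDerivAt_circleAverage_add_mul_log (hU : ContDiff ℝ 1 U) (k : ℝ) (hr : r ≠ 0) :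
    HasDerivAt (fun x => Real.circleAverage U 0 x + k * Real.log x)
      ((2 * Real.pi * k - flux U r) / (2 * Real.pi * r)) r := by
  refine ((hasDerivAt_circleAverage hU hr).fun_add
    ((Real.hasDerivAt_log hr).const_mul k)).congr_deriv ?_
  field

lemma circleAverage_add_mul_log_le_of_le_flux (hU : ContDiff ℝ 2 U) (hs : 0 < s) (hst : s ≤ t)
    (hΔ : ∀ z ∈ closedBall 0 t, 0 ≤ -Δ U z) (hflux : 2 * Real.pi * k ≤ flux U s) :
    Real.circleAverage U 0 t + k * Real.log t ≤ Real.circleAverage U 0 s + k * Real.log s := by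
  have hd x (hx : s ≤ x) := (hasDerivAt_circleAverage_add_mul_log (hU.of_le one_le_two) k
    (hs.trans_le hx).ne').fun_neg
  refine neg_le_neg_iff.1 (le_of_hasDerivAt_nonneg
    (f := fun x => -(Real.circleAverage U 0 x + k * Real.log x)) hst
    (fun x hx => (hd x hx.1).continuousAt.continuousWithinAt) (fun x hx => hd x hx.1.le)
    fun x hx => ?_)
  have hx0 : 0 < x := hs.trans hx.1
  have hmono := flux_le_flux hU (fun z hz => hΔ z (closedBall_subset_closedBall hx.2.le hz))
    hs.le hx.1.le
  rw [← neg_div]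
  exact div_nonneg (by linarith) (by positivity)

lemma circleAverage_add_mul_log_le_of_flux_le (hU : ContDiff ℝ 2 U) (ha : 0 < a) (hb : 0 < b)
    (hq0 : 0 < q) (hq : q ^ 2 = a / b) (hs : 0 < s) (hst : s ≤ t)
    (hlow : ∀ z ∈ closedBall 0 t, a * Real.exp (U z) ≤ -Δ U z)
    (hupp : ∀ z ∈ closedBall 0 t, -Δ U z ≤ b * Real.exp (U z)) (hfs : 4 * Real.pi ≤ flux U s)
    (hft : flux U t ≤ 4 * Real.pi * (1 + q)) :
    Real.circleAverage U 0 t + 2 * (1 + q) * Real.log t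
      ≤ Real.circleAverage U 0 s + 2 * (1 + q) * Real.log s + 2 := by
  have hΔ z (hz : z ∈ closedBall 0 t) : 0 ≤ -Δ U z := le_trans (by positivity) (hlow z hz)
  have hd x (hx : s ≤ x) := ((hasDerivAt_flux hU x).div_const (2 * Real.pi * q)).fun_sub
    (hasDerivAt_circleAverage_add_mul_log (hU.of_le one_le_two) (2 * (1 + q))
      (hs.trans_le hx).ne')
  have hmono := le_of_hasDerivAt_nonneg hst
    (fun x hx => (hd x hx.1).continuousAt.continuousWithinAt) (fun x hx => hd x hx.1.le)
    fun x hx => ?_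
  · have hdrop : flux U t / (2 * Real.pi * q) - flux U s / (2 * Real.pi * q) ≤ 2 := by
      rw [← sub_div, div_le_iff₀ (by positivity)]
      linarith
    linarith
  · have hx0 : 0 < x := hs.trans hx.1
    have hsub : closedBall (0 : ℂ) x ⊆ closedBall 0 t := closedBall_subset_closedBall hx.2.le
    have hgap := mul_sub_le_two_mul_mul_massProfile ha hq
      (hfs.trans (flux_le_flux hU (fun z hz => hΔ z (hsub hz)) hs.le hx.1.le))
      ((flux_le_flux hU hΔ hx0.le hx.2.le).trans hft)
    have hprofile := mul_massProfile_flux_le hU ha hb hx0 (fun z hz => hlow z (hsub hz))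
      fun z hz => hupp z (hsub hz)
    set m := Real.circleAverage (fun z => -Δ U z) 0 x
    have heq : 2 * Real.pi * x * m / (2 * Real.pi * q)
          - (2 * Real.pi * (2 * (1 + q)) - flux U x) / (2 * Real.pi * x)
        = (2 * (Real.pi * x ^ 2 * m) - q * (4 * Real.pi * (1 + q) - flux U x))
          / (2 * Real.pi * q * x) := by field
    rw [heq]
    exact div_nonneg (by linarith) (by positivity)

lemma circleAverage_add_mul_log_le (hU : ContDiff ℝ 2 U) (ha : 0 < a) (hb : 0 < b)
    (hq0 : 0 < q) (hq : q ^ 2 = a / b) (hr : 0 < r) (hrR : r ≤ R)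
    (hlow : ∀ z ∈ closedBall 0 R, a * Real.exp (U z) ≤ -Δ U z)
    (hupp : ∀ z ∈ closedBall 0 R, -Δ U z ≤ b * Real.exp (U z)) (hflux : flux U r = 4 * Real.pi) :
    Real.circleAverage U 0 R + 2 * (1 + q) * Real.log R
      ≤ Real.circleAverage U 0 r + 2 * (1 + q) * Real.log r + 2 := by
  obtain ⟨t, ⟨hrt, htR⟩, hft, ht⟩ := exists_mem_Icc_le_and_eq (c := 4 * Real.pi * (1 + q))
    (fun x _ => (hasDerivAt_flux hU x).continuousAt.continuousWithinAt) hrR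
    (by rw [hflux]; exact le_mul_of_one_le_right (by positivity) (by linarith))
  have hsub : closedBall (0 : ℂ) t ⊆ closedBall 0 R := closedBall_subset_closedBall htR
  have hrise := circleAverage_add_mul_log_le_of_flux_le hU ha hb hq0 hq hr hrt
    (fun z hz => hlow z (hsub hz)) (fun z hz => hupp z (hsub hz)) hflux.ge hft
  rcases ht with rfl | hft
  · exact hrise
  · exact (circleAverage_add_mul_log_le_of_le_flux hU (hr.trans_le hrt) htR
      (fun z hz => le_trans (by positivity) (hlow z hz)) (by linarith)).trans hrise

theorem mul_apply_zero_add_circleAverage_le (hU : ContDiff ℝ 2 U) (ha : 0 < a) (hb : 0 < b)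
    (hq0 : 0 < q) (hq : q ^ 2 = a / b) (hR : 0 < R)
    (hlow : ∀ z ∈ closedBall 0 R, a * Real.exp (U z) ≤ -Δ U z)
    (hupp : ∀ z ∈ closedBall 0 R, -Δ U z ≤ b * Real.exp (U z)) :
    q * U 0 + Real.circleAverage U 0 R
      ≤ (1 + q) * Real.log (4 / a) + 2 * q * b / a + 2 - 2 * (1 + q) * Real.log R := by
  obtain ⟨r, ⟨hr0, hrR⟩, hflux, hr⟩ := exists_mem_Icc_le_and_eq (c := 4 * Real.pi)
    (fun x _ => (hasDerivAt_flux hU x).continuousAt.continuousWithinAt) hR.le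
    (by rw [flux_zero]; positivity)
  have hrpos : 0 < r := by
    refine hr0.lt_of_ne ?_
    rintro rfl
    rcases hr with hr | hr
    · exact hR.ne hr
    · rw [flux_zero] at hr
      linarith [Real.pi_pos]
  have hsub : closedBall (0 : ℂ) r ⊆ closedBall 0 R := closedBall_subset_closedBall hrR
  have hcenter := apply_zero_le_circleAverage_add hU ha hb hr0 (fun z hz => hlow z (hsub hz))
    (fun z hz => hupp z (hsub hz)) hflux
  have hmiddle := circleAverage_add_two_mul_log_le hU ha hrpos (fun z hz => hlow z (hsub hz)) hflux
  have hboundary : Real.circleAverage U 0 R + 2 * (1 + q) * Real.log R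
      ≤ Real.circleAverage U 0 r + 2 * (1 + q) * Real.log r + 2 := by
    rcases hr with rfl | hr
    · linarith
    · exact circleAverage_add_mul_log_le hU ha hb hq0 hq hrpos hrR hlow hupp hr
  calc q * U 0 + Real.circleAverage U 0 R
      ≤ q * (Real.circleAverage U 0 r + 2 * b / a)
        + (Real.circleAverage U 0 r + 2 * (1 + q) * Real.log r + 2
          - 2 * (1 + q) * Real.log R) := by gcongr; linarith
    _ = (1 + q) * (Real.circleAverage U 0 r + 2 * Real.log r) + 2 * q * b / a + 2
        - 2 * (1 + q) * Real.log R := by ring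
    _ ≤ (1 + q) * Real.log (4 / a) + 2 * q * b / a + 2 - 2 * (1 + q) * Real.log R := by gcongr

end RadialInequality

section Plane

open scoped Laplacian

lemma laplacian_comp_add_linearIsometryEquiv {E F G : Type*} [NormedAddCommGroup E]
    [InnerProductSpace ℝ E] [FiniteDimensional ℝ E] [NormedAddCommGroup F] [InnerProductSpace ℝ F]
    [FiniteDimensional ℝ F] [NormedAddCommGroup G] [NormedSpace ℝ G] {f : F → G}
    (hf : ContDiff ℝ 2 f) (L : E ≃ₗᵢ[ℝ] F) (x : F) (z : E) :
    Δ (fun y => f (x + L y)) z = Δ f (x + L z) := by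
  let e := stdOrthonormalBasis ℝ E
  have hcomp := (L.toContinuousLinearEquiv : E →L[ℝ] F).iteratedFDeriv_comp_right (n := 2)
    (f := fun y => f (x + y)) (hf.comp (contDiff_const.add contDiff_id)) z le_rfl
  rw [InnerProductSpace.laplacian_eq_iteratedFDeriv_orthonormalBasis _ e,
    InnerProductSpace.laplacian_eq_iteratedFDeriv_orthonormalBasis _ (e.map L)]
  refine Finset.sum_congr rfl fun i _ => ?_
  change iteratedFDeriv ℝ 2 ((fun y => f (x + y)) ∘ (L.toContinuousLinearEquiv : E →L[ℝ] F)) z _ = _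
  rw [hcomp, iteratedFDeriv_comp_add_left, ContinuousMultilinearMap.compContinuousLinearMap_apply]
  congr 1
  ext j
  fin_cases j <;> simp

lemma lapl_eq_laplacian {u : E2 → ℝ} {x : E2} (hu : ContDiffAt ℝ 2 u x) : lapl u x = Δ u x := by
  rw [InnerProductSpace.laplacian_eq_iteratedFDeriv_orthonormalBasis _
    (EuclideanSpace.basisFun (Fin 2) ℝ)]
  simp only [EuclideanSpace.basisFun_apply, iteratedFDeriv_two_apply, Fin.sum_univ_two,
    Matrix.cons_val_zero, Matrix.cons_val_one, fderiv_fderiv_apply hu]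
  rfl

lemma exists_mem_sphere_le_circleAverage {f : ℂ → ℝ} {c : ℂ} {r : ℝ} (hr : 0 ≤ r)
    (hf : ContinuousOn f (sphere c r)) : ∃ z ∈ sphere c r, f z ≤ Real.circleAverage f c r := by
  obtain ⟨z, hz, hmin⟩ :=
    (isCompact_sphere c r).exists_isMinOn (NormedSpace.sphere_nonempty.2 hr) hf
  refine ⟨z, hz, ?_⟩
  rw [← Real.circleAverage_const (f z) c r]
  refine Real.circleAverage_mono (circleIntegrable_const _ _ _) (hf.circleIntegrable hr)
    fun y hy => ?_
  rw [abs_of_nonneg hr] at hy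
  exact hmin hy

theorem exists_mem_sphere_mul_add_le {Ω : Set E2} {u : E2 → ℝ} {a b q δ : ℝ} {x : E2}
    (hΩ : IsOpen Ω) (hu : ContDiffOn ℝ 2 u Ω) (ha : 0 < a) (hb : 0 < b) (hq0 : 0 < q)
    (hq : q ^ 2 = a / b) (hδ : 0 < δ) (hx : closedBall x δ ⊆ Ω)
    (hlow : ∀ y ∈ closedBall x δ, a * Real.exp (u y) ≤ -lapl u y)
    (hupp : ∀ y ∈ closedBall x δ, -lapl u y ≤ b * Real.exp (u y)) :
    ∃ y ∈ sphere x δ, q * u x + u y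
      ≤ (1 + q) * Real.log (4 / a) + 2 * q * b / a + 2 - 2 * (1 + q) * Real.log δ := by
  obtain ⟨w, hw, hwu⟩ := exists_contDiff_eventuallyEq (n := 2) hu isClosed_closedBall hΩ hx
  let L : ℂ ≃ₗᵢ[ℝ] E2 := Complex.orthonormalBasisOneI.repr
  have hU : ContDiff ℝ 2 fun z : ℂ => w (x + L z) := hw.comp (contDiff_const.add L.contDiff)
  have hmem {z : ℂ} (hz : z ∈ closedBall 0 δ) : x + L z ∈ closedBall x δ := by simpa using hz
  have hval {z : ℂ} (hz : z ∈ closedBall 0 δ) : w (x + L z) = u (x + L z) :=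
    (hwu _ (hmem hz)).eq_of_nhds
  have hΔ {z : ℂ} (hz : z ∈ closedBall 0 δ) : Δ (fun z => w (x + L z)) z = lapl u (x + L z) := by
    rw [laplacian_comp_add_linearIsometryEquiv hw,
      (InnerProductSpace.laplacian_congr_nhds (hwu _ (hmem hz))).eq_of_nhds,
      lapl_eq_laplacian (hu.contDiffAt (hΩ.mem_nhds (hx (hmem hz))))]
  have hmain := mul_apply_zero_add_circleAverage_le hU ha hb hq0 hq hδ
    (fun z hz => by rw [hΔ hz, hval hz]; exact hlow _ (hmem hz))
    fun z hz => by rw [hΔ hz, hval hz]; exact hupp _ (hmem hz)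
  obtain ⟨z, hz, hle⟩ := exists_mem_sphere_le_circleAverage (c := 0) hδ.le
    hU.continuous.continuousOn
  refine ⟨x + L z, by simpa using hz, ?_⟩
  rw [hval (mem_closedBall_self hδ.le), map_zero, add_zero] at hmain
  rw [hval (sphere_subset_closedBall hz)] at hle
  linarith

end Plane

theorem stmt4 (Ω : Set E2) (hΩ : IsOpen Ω) (a b : ℝ) (ha : 0 < a) (hab : a ≤ b)
    (K : Set E2) (hK : IsCompact K) (hKΩ : K ⊆ Ω) :
    ∃ c : ℝ, ∀ V u : E2 → ℝ,
      (∀ x ∈ Ω, a ≤ V x ∧ V x ≤ b) →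
      ContDiffOn ℝ 2 u Ω →
      (∀ x ∈ Ω, -(lapl u x) = V x * Real.exp (u x)) →
      ∀ x ∈ K, ∀ ε : ℝ, 0 < ε → ∃ y ∈ Ω, Real.sqrt (a / b) * u x + u y < c + ε := by
  have hb : 0 < b := ha.trans_le hab
  obtain ⟨δ, hδ, hsub⟩ := hK.exists_cthickening_subset_open hΩ hKΩ
  set q := Real.sqrt (a / b)
  refine ⟨(1 + q) * Real.log (4 / a) + 2 * q * b / a + 2 - 2 * (1 + q) * Real.log δ,
    fun V u hV hu heq x hx ε hε => ?_⟩
  have hball : closedBall x δ ⊆ Ω := (closedBall_subset_cthickening hx δ).trans hsub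
  obtain ⟨y, hy, hle⟩ := exists_mem_sphere_mul_add_le hΩ hu ha hb
    (Real.sqrt_pos.2 (by positivity)) (Real.sq_sqrt (by positivity)) hδ hball
    (fun y hy => by rw [heq y (hball hy)]; gcongr; exact (hV y (hball hy)).1)
    fun y hy => by rw [heq y (hball hy)]; gcongr; exact (hV y (hball hy)).2
  exact ⟨y, hball (sphere_subset_closedBall hy), hle.trans_lt (lt_add_of_pos_right _ hε)⟩
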